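/- arXiv:2101.07131 — 3 statements merged into one kernel-verified Lean document; each statement's English description precedes it below -/
import Mathlib

section
/- A finite simple graph G is ternary if and only if |ε(G[S])| ≤ 1 for every subset S of the vertex set of G; equivalently, G has no induced cycle of length divisible by 3 if and only if for every induced subgraph H of G, the number of independent sets of H of even size and the number of independent sets of H of odd size differ by at most 1. -/
/-!
The signed count `ε(G[S])` is, up to sign, the reduced Euler characteristic of the independence
complex of `G[S]`. The proof works with homology over the field with two elements, indexed so that
a set of size `k` has degree `k`.

If `G` contains an induced cycle of length `3q + 3`, deleting a vertex and its closed neighbourhood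
reduces its signed count to the counts of paths, which are `6`-periodic; the result is `±2`.

Conversely, let `G` be ternary. The claim is that the total Betti number of every induced subgraph
is at most one (`small_of_ternary`); the bound on the Euler characteristic follows by induction from
the long exact sequence of a vertex `v`, relating `S`, `S - v` and `S - N[v]` (`eps_of_small`).
Let `T` be a minimal counterexample. All its proper subsets have at most one class, and the exact
sequences show that for every `v ∈ T` the set `T - v` carries exactly one class, which survives in
`T`; call its image `[v]`. The following facts hold.

* Adjacent vertices have different classes (`Crit.not_hom_of_adj`).
* There are at most three different classes `[v]`; if there are three, they share their degree and
  add up to zero (`Crit.three`, `Crit.no_four`). So the classes are a proper 3-colouring of `G[T]`.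
* The neighbours of a vertex cannot all carry one class of maximal degree (`Crit.not_mono`). Indeed
  such a class is represented by a cycle avoiding all these neighbours (`Crit.flag`), that is, in a
  graph where the vertex is isolated and whose independence complex is therefore a cone.

A vertex of minimal degree shows first that all degrees agree. Then every vertex has neighbours of
both other colours, in particular of the next colour modulo three. Following these edges gives
directed cycles, and a shortest one is an induced cycle (`exists_chordless`) along which the colour
increases by one at each step, so that its length is divisible by three: a contradiction.
-/

open Finset Classical in
/-- The signed independent-set count `ε(G) = Σ_A (−1)^{|A|}` over all independent
sets `A` of `G` (including the empty set). -/
noncomputable def signedIndepCount {V : Type*} [Fintype V] (G : SimpleGraph V) : ℤ :=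
  ∑ A ∈ Finset.univ.filter
      (fun A : Finset V => ∀ a ∈ A, ∀ b ∈ A, a ≠ b → ¬ G.Adj a b),
    (-1 : ℤ) ^ A.card

/-- A graph is ternary if it has no induced cycle of length divisible by 3, i.e.
for every `n ≥ 3` divisible by `3` there is no graph embedding of the cycle graph
`C_n` into `G`. -/
def SimpleGraph.Ternary {V : Type*} (G : SimpleGraph V) : Prop :=
  ∀ n : ℕ, 3 ≤ n → 3 ∣ n → IsEmpty (SimpleGraph.cycleGraph n ↪g G)

namespace KalaiMeshulam

set_option linter.unusedSectionVars false

open Finset Classical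

variable {V : Type*} [Fintype V]

/-! ### Chains over the field with two elements -/

/-- `c` is a chain of the independence complex of `G[S]`, supported on sets of size `k`
(so the empty set sits in degree `0`, and homology is reduced). -/
def Chain (G : SimpleGraph V) (k : ℕ) (S : Finset V) (c : Finset V → ZMod 2) : Prop :=
  ∀ A, c A ≠ 0 → A ⊆ S ∧ A.card = k ∧ ∀ a ∈ A, ∀ b ∈ A, a ≠ b → ¬ G.Adj a b

/-- The simplicial boundary operator mod 2. -/
noncomputable def bdry (c : Finset V → ZMod 2) : Finset V → ZMod 2 :=
  fun A => ∑ x ∈ Aᶜ, c (insert x A)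

/-- Cycles of degree `k` in `G[S]`. -/
def Cyc (G : SimpleGraph V) (k : ℕ) (S : Finset V) (c : Finset V → ZMod 2) : Prop :=
  Chain G k S c ∧ bdry c = 0

/-- `c` is a boundary of degree `k` in `G[S]`. -/
def Bd (G : SimpleGraph V) (k : ℕ) (S : Finset V) (c : Finset V → ZMod 2) : Prop :=
  ∃ b, Chain G (k + 1) S b ∧ bdry b = c

/-- The link part of a chain: `c = dl v c + v * lk v c`. -/
noncomputable def lk (v : V) (c : Finset V → ZMod 2) : Finset V → ZMod 2 :=
  fun A => if v ∈ A then 0 else c (insert v A)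

/-- The part of a chain supported on sets avoiding `v`. -/
noncomputable def dl (v : V) (c : Finset V → ZMod 2) : Finset V → ZMod 2 :=
  fun A => if v ∈ A then 0 else c A

/-- The cone `v * c`. -/
noncomputable def cn (v : V) (c : Finset V → ZMod 2) : Finset V → ZMod 2 :=
  fun A => if v ∈ A then c (A.erase v) else 0

/-- The vertices of `S` outside the closed neighbourhood of `v`. -/
noncomputable def away (G : SimpleGraph V) (S : Finset V) (v : V) : Finset V :=
  S.filter fun x => x ≠ v ∧ ¬ G.Adj v x

variable {G : SimpleGraph V} {S T : Finset V} {k l d : ℕ} {c c' z : Finset V → ZMod 2} {u v w : V}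

theorem add_self_chain (c : Finset V → ZMod 2) : c + c = 0 := by
  funext A; exact CharTwo.add_self_eq_zero _

theorem bdry_add (c c' : Finset V → ZMod 2) : bdry (c + c') = bdry c + bdry c' := by
  funext A; simp [bdry, Finset.sum_add_distrib]

theorem lk_add (c c' : Finset V → ZMod 2) : lk v (c + c') = lk v c + lk v c' := by
  funext A; by_cases h : v ∈ A <;> simp [lk, h]

theorem lk_bdry (c : Finset V → ZMod 2) : lk v (bdry c) = bdry (lk v c) := by
  funext A
  by_cases h : v ∈ A
  · simp [lk, bdry, h]
  · simp only [lk, bdry, h, if_false]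
    have : (Aᶜ : Finset V) = insert v (insert v A)ᶜ := by
      ext x; by_cases hx : x = v <;> simp [hx, h]
    rw [this, Finset.sum_insert (by simp)]
    simp only [mem_insert, true_or, if_true, zero_add]
    refine Finset.sum_congr rfl fun x hx => ?_
    simp only [mem_compl, mem_insert, not_or] at hx
    have h2 : v ≠ x := fun e => hx.1 e.symm
    simp [h2, h, Finset.insert_comm]

theorem dl_bdry (c : Finset V → ZMod 2) : dl v (bdry c) = bdry (dl v c) + lk v c := by
  funext A
  by_cases h : v ∈ A
  · simp [dl, lk, bdry, h]
  · simp only [dl, lk, bdry, h, if_false, Pi.add_apply]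
    have : (Aᶜ : Finset V) = insert v (insert v A)ᶜ := by
      ext x; by_cases hx : x = v <;> simp [hx, h]
    rw [this, Finset.sum_insert (by simp), Finset.sum_insert (by simp), add_comm]
    simp only [mem_insert, true_or, if_true, zero_add]
    congr 1
    refine Finset.sum_congr rfl fun x hx => ?_
    simp only [mem_compl, mem_insert, not_or] at hx
    have h2 : v ≠ x := fun e => hx.1 e.symm
    simp [h2, h]

theorem bdry_cn (hc : ∀ A, v ∈ A → c A = 0) : bdry (cn v c) = c + cn v (bdry c) := by
  funext A
  by_cases h : v ∈ A
  · simp only [cn, bdry, h, if_true, Pi.add_apply, hc A h, zero_add, mem_insert, or_true]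
    have : ((A.erase v)ᶜ : Finset V) = insert v Aᶜ := by
      ext x; by_cases hx : x = v <;> simp [hx]
    rw [this, Finset.sum_insert (by simp [h]), hc _ (mem_insert_self _ _), zero_add]
    refine Finset.sum_congr rfl fun x hx => ?_
    have h2 : x ≠ v := fun e => by subst e; simp [h] at hx
    rw [Finset.erase_insert_of_ne h2]
  · simp only [cn, bdry, h, if_false, Pi.add_apply, add_zero, mem_insert, or_false]
    rw [Finset.sum_eq_single v]
    · simp [h]
    · intro b _ hb; simp [hb.symm]
    · intro hv; simp [h] at hv

theorem dl_add_cn_lk (c : Finset V → ZMod 2) : dl v c + cn v (lk v c) = c := by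
  funext A
  by_cases h : v ∈ A
  · simp [dl, cn, lk, h]
  · simp [dl, cn, h]

theorem Chain.add (h : Chain G k S c) (h' : Chain G k S c') : Chain G k S (c + c') := by
  intro A hA
  by_cases h1 : c A = 0
  · exact h' A (by simpa [h1] using hA)
  · exact h A h1

theorem Chain.mono (h : Chain G k S c) (hS : S ⊆ T) : Chain G k T c :=
  fun A hA => ⟨(h A hA).1.trans hS, (h A hA).2⟩

theorem Cyc.add (h : Cyc G k S c) (h' : Cyc G k S c') : Cyc G k S (c + c') :=
  ⟨h.1.add h'.1, by rw [bdry_add, h.2, h'.2, add_zero]⟩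

theorem Cyc.mono (h : Cyc G k S c) (hS : S ⊆ T) : Cyc G k T c := ⟨h.1.mono hS, h.2⟩

theorem Bd.add (h : Bd G k S c) (h' : Bd G k S c') : Bd G k S (c + c') := by
  obtain ⟨b, hb, rfl⟩ := h
  obtain ⟨b', hb', rfl⟩ := h'
  exact ⟨b + b', hb.add hb', bdry_add _ _⟩

theorem Bd.mono (h : Bd G k S c) (hS : S ⊆ T) : Bd G k T c := by
  obtain ⟨b, hb, rfl⟩ := h
  exact ⟨b, hb.mono hS, rfl⟩

theorem Bd.of_add (h : Bd G k S (c + c')) (h' : Bd G k S c') : Bd G k S c := by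
  have := h.add h'
  rwa [add_assoc, add_self_chain, add_zero] at this

theorem Bd.of_add' (h : Bd G k S (c + c')) (hc : Bd G k S c) : Bd G k S c' := by
  rw [add_comm] at h; exact h.of_add hc

/-- Transitivity of the relation of being homologous. -/
theorem Bd.trans' (h : Bd G k S (c + c')) (h' : Bd G k S (c' + z)) : Bd G k S (c + z) := by
  have := h.add h'
  rwa [show c + c' + (c' + z) = c + z + (c' + c') by abel, add_self_chain, add_zero] at this

theorem mem_away {x : V} : x ∈ away G S v ↔ x ∈ S ∧ x ≠ v ∧ ¬ G.Adj v x := by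
  simp [away]

theorem away_subset_erase : away G S v ⊆ S.erase v := by
  intro x hx; rw [mem_away] at hx; simp [hx.1, hx.2.1]

theorem Chain.eq_zero (h : Chain G k S c) (hv : v ∉ S) {A : Finset V} (hA : v ∈ A) : c A = 0 := by
  by_contra h0
  exact hv ((h A h0).1 hA)

theorem Chain.lk (h : Chain G (k + 1) S c) : Chain G k (away G S v) (lk v c) := by
  intro A hA
  by_cases hv : v ∈ A
  · simp [KalaiMeshulam.lk, hv] at hA
  · simp only [KalaiMeshulam.lk, hv, if_false] at hA
    obtain ⟨h1, h2, h3⟩ := h _ hA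
    refine ⟨fun x hx => ?_, ?_, fun a ha b hb => h3 a (mem_insert_of_mem ha) b (mem_insert_of_mem hb)⟩
    · have hxv : x ≠ v := fun e => hv (e ▸ hx)
      exact mem_away.2 ⟨h1 (mem_insert_of_mem hx), hxv,
        h3 v (mem_insert_self _ _) x (mem_insert_of_mem hx) hxv.symm⟩
    · rw [card_insert_of_notMem hv] at h2; omega

theorem Chain.dl (h : Chain G k S c) : Chain G k (S.erase v) (dl v c) := by
  intro A hA
  by_cases hv : v ∈ A
  · simp [KalaiMeshulam.dl, hv] at hA
  · simp only [KalaiMeshulam.dl, hv, if_false] at hA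
    obtain ⟨h1, h2⟩ := h _ hA
    exact ⟨subset_erase.2 ⟨h1, hv⟩, h2⟩

theorem Chain.cn (h : Chain G k (away G S v) c) (hv : v ∈ S) : Chain G (k + 1) S (cn v c) := by
  intro A hA
  by_cases hvA : v ∈ A
  · simp only [KalaiMeshulam.cn, hvA, if_true] at hA
    obtain ⟨h1, h2, h3⟩ := h _ hA
    have key : ∀ x ∈ A, x ≠ v → x ∈ S ∧ ¬ G.Adj v x := fun x hx hxv =>
      have := mem_away.1 (h1 (mem_erase.2 ⟨hxv, hx⟩)); ⟨this.1, this.2.2⟩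
    refine ⟨fun x hx => ?_, ?_, fun a ha b hb hab => ?_⟩
    · by_cases hxv : x = v
      · exact hxv ▸ hv
      · exact (key x hx hxv).1
    · rw [card_erase_of_mem hvA] at h2
      have := card_pos.2 ⟨v, hvA⟩; omega
    · by_cases hav : a = v
      · subst hav; exact (key b hb hab.symm).2
      · by_cases hbv : b = v
        · subst hbv; exact fun e => (key a ha hab).2 e.symm
        · exact h3 a (mem_erase.2 ⟨hav, ha⟩) b (mem_erase.2 ⟨hbv, hb⟩) hab
  · simp [KalaiMeshulam.cn, hvA] at hA

/-! ### The long exact sequence of a vertex, element by element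

For `v ∈ S` the independence complex of `G[S]` is that of `G[S - v]` with a cone over that of
`G[S - N[v]]` attached. -/

theorem lk_eq_zero (h : Chain G k S c) (hv : v ∉ S) : lk v c = 0 := by
  funext A
  by_cases hA : v ∈ A
  · simp [lk, hA]
  · simpa [lk, hA] using h.eq_zero hv (mem_insert_self v A)

theorem Cyc.lk (h : Cyc G (k + 1) S c) : Cyc G k (away G S v) (lk v c) := by
  refine ⟨h.1.lk, ?_⟩
  rw [← lk_bdry, h.2]; funext A; simp [KalaiMeshulam.lk]

theorem Bd.lk (h : Bd G (k + 1) S c) : Bd G k (away G S v) (lk v c) := by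
  obtain ⟨b, hb, rfl⟩ := h
  exact ⟨_, hb.lk, (lk_bdry b).symm⟩

/-- A cycle whose link part bounds is homologous to a cycle avoiding `v`. In degree `0` no
hypothesis on the link part is needed. -/
theorem Cyc.push (h : Cyc G k S c) (hv : v ∈ S)
    (hl : ∀ j, k = j + 1 → Bd G j (away G S v) (KalaiMeshulam.lk v c)) :
    ∃ c', Cyc G k (S.erase v) c' ∧ Bd G k S (c + c') := by
  cases k with
  | zero =>
    refine ⟨c, ⟨fun A hA => ?_, h.2⟩, ?_⟩
    · have := h.1 A hA
      have hA0 : A = ∅ := card_eq_zero.1 this.2.1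
      exact ⟨by simp [hA0], this.2⟩
    · rw [add_self_chain]
      exact ⟨0, fun A hA => by simp at hA, by funext A; simp [bdry]⟩
  | succ j =>
    obtain ⟨e, he, hbe⟩ := hl j rfl
    have hev : ∀ A, v ∈ A → e A = 0 := fun A => he.eq_zero (by simp [mem_away])
    have h1 : c + (dl v c + e) = bdry (cn v e) := by
      rw [bdry_cn hev, hbe]
      nth_rewrite 1 [← dl_add_cn_lk (v := v) c]
      rw [show ∀ a b e : Finset V → ZMod 2, a + b + (a + e) = e + b + (a + a) from
        fun a b e => by abel, add_self_chain, add_zero]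
    refine ⟨dl v c + e, ⟨h.1.dl.add (he.mono away_subset_erase), ?_⟩, _, he.cn hv, h1.symm⟩
    have h2 := dl_bdry (v := v) c
    rw [h.2] at h2
    have h3 : dl v (0 : Finset V → ZMod 2) = 0 := by funext A; simp [dl]
    rw [bdry_add, hbe, ← h2, h3]

/-- A cycle avoiding `v` that bounds in `S` is homologous, away from `v`, to a cycle of the link. -/
theorem Bd.pull (h : Bd G k S z) (hz : Cyc G k (S.erase v) z) :
    ∃ y, Cyc G k (away G S v) y ∧ Bd G k (S.erase v) (z + y) := by
  obtain ⟨b, hb, rfl⟩ := h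
  refine ⟨KalaiMeshulam.lk v b, ⟨hb.lk, ?_⟩, dl v b, hb.dl, ?_⟩
  · rw [← lk_bdry]; exact lk_eq_zero hz.1 (by simp)
  · have h2 := dl_bdry (v := v) b
    have h3 : dl v (bdry b) = bdry b := by
      funext A
      by_cases hA : v ∈ A
      · rw [hz.1.eq_zero (by simp) hA]; simp [dl, hA]
      · simp [dl, hA]
    rw [← h3, h2, add_assoc, add_self_chain, add_zero]

theorem Cyc.lift {y : Finset V → ZMod 2} (hy : Cyc G k (away G S v) y) (hv : v ∈ S)
    (h : Bd G k (S.erase v) y) : ∃ c, Cyc G (k + 1) S c ∧ KalaiMeshulam.lk v c = y := by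
  obtain ⟨e, he, hbe⟩ := h
  have hyv : ∀ A, v ∈ A → y A = 0 := fun A => hy.1.eq_zero (by simp [mem_away])
  refine ⟨cn v y + e, ⟨(hy.1.cn hv).add (he.mono (erase_subset _ _)), ?_⟩, ?_⟩
  · have h0 : cn v (0 : Finset V → ZMod 2) = 0 := by funext A; simp [cn]
    rw [bdry_add, bdry_cn hyv, hy.2, hbe, h0, add_zero, add_self_chain]
  · rw [lk_add, lk_eq_zero he (by simp), add_zero]
    funext A
    by_cases hA : v ∈ A
    · simp [KalaiMeshulam.lk, hA, hyv A hA]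
    · simp [KalaiMeshulam.lk, cn, hA]

theorem Cyc.bd_of_away {y : Finset V → ZMod 2} (hy : Cyc G k (away G S v) y) (hv : v ∈ S) :
    Bd G k S y := by
  have hyv : ∀ A, v ∈ A → y A = 0 := fun A => hy.1.eq_zero (by simp [mem_away])
  refine ⟨cn v y, hy.1.cn hv, ?_⟩
  have h0 : cn v (0 : Finset V → ZMod 2) = 0 := by funext A; simp [cn]
  rw [bdry_cn hyv, hy.2, h0, add_zero]

/-! ### Induced subgraphs with total Betti number at most one -/

/-- The total reduced Betti number of the independence complex of `G[S]` is at most `1`. Over the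
field with two elements this says that any two non-bounding homogeneous cycles are homologous (and
in particular of the same degree). -/
def Small (G : SimpleGraph V) (S : Finset V) : Prop :=
  ∀ k l c b, Cyc G k S c → Cyc G l S b → ¬ Bd G k S c → ¬ Bd G l S b →
    k = l ∧ Bd G k S (c + b)

/-- The independence complex of `G[S]` has vanishing reduced homology. -/
def Acyc (G : SimpleGraph V) (S : Finset V) : Prop :=
  ∀ k c, Cyc G k S c → Bd G k S c

theorem Bd.zero : Bd G k S 0 :=
  ⟨0, fun A hA => by simp at hA, by funext A; simp [bdry]⟩

theorem Bd.comm (h : Bd G k S (c + c')) : Bd G k S (c' + c) := by rwa [add_comm]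

/-- If `S - v` and the link of `v` have at most one class each and a class of `S - v` dies in `S`,
then `S` is acyclic: the two classes cancel in the exact sequence. -/
theorem acyc_of_dies (hv : v ∈ S) (h1 : Small G (S.erase v)) (h2 : Small G (away G S v))
    (hz : Cyc G k (S.erase v) z) (hz1 : ¬ Bd G k (S.erase v) z) (hz2 : Bd G k S z) :
    Acyc G S := by
  intro j c hc
  obtain ⟨y, hy, hyz⟩ := hz2.pull hz
  have hy1 : ¬ Bd G k (S.erase v) y := fun h => hz1 (hyz.of_add h)
  have hl : ∀ i, j = i + 1 → Bd G i (away G S v) (lk v c) := by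
    rintro i rfl
    by_contra hn
    obtain ⟨rfl, h⟩ := h2 _ _ _ _ hc.lk hy hn fun h => hy1 (h.mono away_subset_erase)
    refine hy1 ((h.mono away_subset_erase).of_add' ?_)
    refine ⟨dl v c, hc.1.dl, ?_⟩
    have h3 := dl_bdry (v := v) c
    rw [hc.2] at h3
    have h4 : dl v (0 : Finset V → ZMod 2) = 0 := by funext A; simp [dl]
    rw [h4] at h3
    have h5 := congrArg (· + lk v c) h3
    simpa [add_assoc, add_self_chain] using h5.symm
  obtain ⟨c', hc', hcc⟩ := hc.push hv hl
  refine hcc.of_add ?_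
  by_cases hb : Bd G j (S.erase v) c'
  · exact hb.mono (erase_subset _ _)
  · obtain ⟨rfl, h⟩ := h1 _ _ _ _ hc' hz hb hz1
    exact (h.mono (erase_subset _ _)).of_add hz2

theorem away_sdiff (D : Finset V) : away G (S \ D) v = away G S v \ D := by
  ext x; simp only [mem_away, mem_sdiff]; tauto

theorem erase_sdiff_eq (D : Finset V) : (S \ D).erase v = S \ insert v D := by
  ext x; simp only [mem_erase, mem_sdiff, mem_insert]; tauto

theorem away_subset : away G S v ⊆ S := away_subset_erase.trans (erase_subset _ _)

/-- If `S - v` and `S` are acyclic, so is the link. -/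
theorem acyc_away (hv : v ∈ S) (h1 : Acyc G (S.erase v)) (h2 : Acyc G S) :
    Acyc G (away G S v) := by
  intro j c hc
  obtain ⟨C, hC, rfl⟩ := hc.lift hv (h1 _ _ (hc.mono away_subset_erase))
  exact (h2 _ _ hC).lk

/-- Let `D ⊆ K` be independent. If `K - D` carries a class of degree `m`, the intermediate graphs
`K - D'` are acyclic and `K` carries a class of degree `j`, then `j = m + |D| - 1`: passing to the
link of a vertex of `D` lowers `j` by one and removes that vertex from `D`. -/
theorem degree_shift : ∀ (n : ℕ) (K D : Finset V) (m j : ℕ) (z c : Finset V → ZMod 2),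
    D.card = n + 1 → D ⊆ K → (∀ a ∈ D, ∀ b ∈ D, ¬ G.Adj a b) → (∀ S ⊆ K, Small G S) →
    (∀ D' ⊆ D, D'.Nonempty → D' ≠ D → Acyc G (K \ D')) →
    Cyc G m (K \ D) z → ¬ Bd G m (K \ D) z → Cyc G j K c → ¬ Bd G j K c → j = m + n := by
  intro n
  induction n with
  | zero =>
    intro K D m j z c hD hDK hind hK _ hz hz1 hc hc1
    obtain ⟨x, rfl⟩ := card_eq_one.1 hD
    have hx : x ∈ K := hDK (mem_singleton_self x)
    rw [sdiff_singleton_eq_erase] at hz hz1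
    by_cases hb : Bd G m K z
    · exact absurd (acyc_of_dies hx (hK _ (erase_subset _ _)) (hK _ away_subset) hz hz1 hb j c hc) hc1
    · exact (hK K subset_rfl _ _ _ _ hc (hz.mono (erase_subset _ _)) hc1 hb).1
  | succ n ih =>
    intro K D m j z c hD hDK hind hK hac hz hz1 hc hc1
    obtain ⟨x, hxD⟩ : D.Nonempty := card_pos.1 (by omega)
    have hx : x ∈ K := hDK hxD
    have hcard : (D.erase x).card = n + 1 := by rw [card_erase_of_mem hxD]; omega
    have hins : insert x (D.erase x) = D := insert_erase hxD
    have hne : (D.erase x).Nonempty := card_pos.1 (by omega)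
    have hxD' : x ∈ K \ D.erase x := by simp [hx]
    have hKx : Acyc G (K.erase x) := by
      rw [← sdiff_singleton_eq_erase]
      exact hac {x} (by simpa using hxD) (singleton_nonempty x)
        (fun h => by rw [← h, card_singleton] at hD; omega)
    -- the class of `K - D` dies in `K - (D - x)`, hence comes from the link
    have hz2 : Bd G m (K \ D.erase x) z := by
      refine hac _ (erase_subset _ _) hne (fun h => ?_) _ _
        (hz.mono (sdiff_subset_sdiff subset_rfl (erase_subset _ _)))
      rw [h] at hcard; omega
    obtain ⟨y, hy, hyz⟩ := hz2.pull (v := x) (by rwa [erase_sdiff_eq, hins])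
    rw [erase_sdiff_eq, hins] at hyz
    have hy1 : ¬ Bd G m (away G (K \ D.erase x) x) y := fun h => hz1 (hyz.of_add (h.mono (by
      have := away_subset_erase (G := G) (S := K \ D.erase x) (v := x)
      rwa [erase_sdiff_eq, hins] at this)))
    rw [away_sdiff] at hy hy1
    -- the class of `K` does not come from `K - x`
    have hlk : ∃ i, j = i + 1 ∧ ¬ Bd G i (away G K x) (lk x c) := by
      by_contra hcon
      push Not at hcon
      obtain ⟨c', hc', hcc⟩ := hc.push hx hcon
      exact hc1 (hcc.of_add ((hKx _ _ hc').mono (erase_subset _ _)))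
    obtain ⟨i, rfl, hi⟩ := hlk
    have hDa : D.erase x ⊆ away G K x := fun t ht => mem_away.2
      ⟨hDK (mem_of_mem_erase ht), ne_of_mem_erase ht, hind _ hxD _ (mem_of_mem_erase ht)⟩
    have := ih (away G K x) (D.erase x) m i y (lk x c) hcard hDa
      (fun a ha b hb => hind _ (mem_of_mem_erase ha) _ (mem_of_mem_erase hb))
      (fun S hS => hK S (hS.trans away_subset)) ?_ hy hy1 hc.lk hi
    · omega
    intro D' hD' hne' hD'ne
    rw [← away_sdiff]
    have hxD'' : x ∉ D' := fun h => by simpa using hD' h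
    refine acyc_away (by simp [hx, hxD'']) ?_ ?_
    · rw [erase_sdiff_eq]
      refine hac _ (insert_subset hxD (hD'.trans (erase_subset _ _))) (insert_nonempty _ _) ?_
      intro h
      apply hD'ne
      rw [← h, erase_insert hxD'']
    · refine hac _ (hD'.trans (erase_subset _ _)) hne' ?_
      intro h; exact hxD'' (h ▸ hxD)

/-- The independence complex of a graph with an isolated vertex is a cone. -/
theorem Cyc.bd_of_isolated (h : Cyc G k S c) (hv : v ∈ S) (hiso : ∀ x ∈ S, ¬ G.Adj v x) :
    Bd G k S c := by
  have hS : S.erase v ⊆ away G S v := fun x hx =>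
    mem_away.2 ⟨mem_of_mem_erase hx, ne_of_mem_erase hx, hiso _ (mem_of_mem_erase hx)⟩
  refine ⟨cn v (dl v c), (h.1.dl.mono hS).cn hv, ?_⟩
  have h2 := dl_bdry (v := v) c
  rw [h.2] at h2
  have h3 : dl v (0 : Finset V → ZMod 2) = 0 := by funext A; simp [dl]
  rw [h3] at h2
  have h4 : bdry (dl v c) = KalaiMeshulam.lk v c := by
    have h5 := congrArg (· + KalaiMeshulam.lk v c) h2
    simpa [add_assoc, add_self_chain] using h5.symm
  rw [bdry_cn (fun A hA => by simp [dl, hA]), h4, dl_add_cn_lk]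

/-- A non-bounding cycle that is homologous to no cycle avoiding `v` except possibly bounding ones
has a non-bounding link part. -/
theorem Cyc.exists_lk (hc : Cyc G k S c) (hv : v ∈ S) (hc1 : ¬ Bd G k S c)
    (h : ∀ c', Cyc G k (S.erase v) c' → Bd G k S (c + c') → Bd G k S c') :
    ∃ i, k = i + 1 ∧ ¬ Bd G i (away G S v) (KalaiMeshulam.lk v c) := by
  by_contra hcon
  push Not at hcon
  obtain ⟨c', hc', hcc⟩ := hc.push hv hcon
  exact hc1 (hcc.of_add (h _ hc' hcc))

/-! ### Minimal induced subgraphs with two independent classes -/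

/-- `T` is minimal with total Betti number at least two; for each `v ∈ T` the cycle `zz v`, of
degree `dd v`, avoids `v` and does not bound in `T`. -/
structure Crit (G : SimpleGraph V) (T : Finset V) (dd : V → ℕ) (zz : V → Finset V → ZMod 2) :
    Prop where
  small : ∀ S, S ⊂ T → Small G S
  not_small : ¬ Small G T
  cyc : ∀ v ∈ T, Cyc G (dd v) (T.erase v) (zz v)
  nbd : ∀ v ∈ T, ¬ Bd G (dd v) T (zz v)

/-- A cycle `c` of degree `k` and a cycle `c'` of degree `l` are homologous in `S`. -/
def Hom (G : SimpleGraph V) (S : Finset V) (k : ℕ) (c : Finset V → ZMod 2) (l : ℕ)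
    (c' : Finset V → ZMod 2) : Prop :=
  k = l ∧ Bd G k S (c + c')

theorem Acyc.small (h : Acyc G S) : Small G S :=
  fun _ _ _ _ hc _ hn _ => absurd (h _ _ hc) hn

theorem away_ssubset (hv : v ∈ S) : away G S v ⊂ S :=
  lt_of_le_of_lt away_subset_erase (erase_ssubset hv)

/-- In a minimal `T`, the classes of `T - v` embed in those of `T`. -/
theorem bd_erase (hs : ∀ S, S ⊂ T → Small G S) (hn : ¬ Small G T) (hv : v ∈ T)
    (hz : Cyc G k (T.erase v) z) (hb : Bd G k T z) : Bd G k (T.erase v) z := by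
  by_contra h
  exact hn (acyc_of_dies hv (hs _ (erase_ssubset hv)) (hs _ (away_ssubset hv)) hz h hb).small

theorem exists_crit (hs : ∀ S, S ⊂ T → Small G S) (hn : ¬ Small G T) :
    ∃ dd zz, Crit G T dd zz := by
  have key : ∀ v, ∃ d z, v ∈ T → Cyc G d (T.erase v) z ∧ ¬ Bd G d T z := by
    intro v
    by_cases hv : v ∈ T
    swap
    · exact ⟨0, 0, fun h => absurd h hv⟩
    by_contra hcon
    push Not at hcon
    refine hn fun k l c c' hc hc' hcn hcn' => ?_
    obtain ⟨i, rfl, hi⟩ := hc.exists_lk hv hcn fun b hb _ => (hcon _ b).2 hb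
    obtain ⟨j, rfl, hj⟩ := hc'.exists_lk hv hcn' fun b hb _ => (hcon _ b).2 hb
    obtain ⟨rfl, h⟩ := hs _ (away_ssubset hv) _ _ _ _ hc.lk hc'.lk hi hj
    refine ⟨rfl, ?_⟩
    obtain ⟨b, hb, hbb⟩ := (hc.add hc').push hv (by
      rintro j ⟨⟩; rwa [lk_add])
    exact hbb.of_add ((hcon _ b).2 hb)
  choose dd zz h using key
  exact ⟨dd, zz, hs, hn, fun v hv => (h v hv).1, fun v hv => (h v hv).2⟩

variable {dd : V → ℕ} {zz : V → Finset V → ZMod 2} {x y a b : V}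

/-- No link of a minimal `T` is acyclic. -/
theorem Crit.not_acyc_away (H : Crit G T dd zz) (hv : v ∈ T) : ¬ Acyc G (away G T v) := by
  intro hA
  refine H.not_small fun k l c c' hc hc' hcn hcn' => ?_
  obtain ⟨b, hb, hbb⟩ := hc.push hv (by rintro j rfl; exact hA _ _ hc.lk)
  obtain ⟨b', hb', hbb'⟩ := hc'.push hv (by rintro j rfl; exact hA _ _ hc'.lk)
  have hE := erase_subset v T
  obtain ⟨rfl, h⟩ := H.small _ (erase_ssubset hv) _ _ _ _ hb hb'
    (fun h => hcn (hbb.of_add (h.mono hE))) (fun h => hcn' (hbb'.of_add (h.mono hE)))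
  exact ⟨rfl, (hbb.trans' (h.mono hE)).trans' hbb'.comm⟩

theorem Crit.hom_of_erase (H : Crit G T dd zz) (hv : v ∈ T) (hc : Cyc G k (T.erase v) c)
    (hn : ¬ Bd G k T c) : Hom G T k c (dd v) (zz v) := by
  have hE := erase_subset v T
  obtain ⟨h1, h2⟩ := H.small _ (erase_ssubset hv) _ _ _ _ hc (H.cyc v hv)
    (fun h => hn (h.mono hE)) (fun h => H.nbd v hv (h.mono hE))
  exact ⟨h1, h2.mono hE⟩

/-- If a class of `T` survives the removal of `y` and of `D`, the link of `y` becomes acyclic after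
the removal of `D`. -/
theorem Crit.acyc_away_sdiff (H : Crit G T dd zz) {D : Finset V} (hD : D.Nonempty) (hDT : D ⊆ T)
    (hy : y ∈ T) (hyD : y ∉ D) (hc : Cyc G k (T \ insert y D) c) (hn : ¬ Bd G k T c) :
    Acyc G (away G T y \ D) := by
  have hyTD : y ∈ T \ D := mem_sdiff.2 ⟨hy, hyD⟩
  have hss : T \ D ⊂ T := sdiff_ssubset hDT hD
  have hsub : T \ insert y D ⊆ T := sdiff_subset
  have hsub' : T \ insert y D ⊆ T \ D := sdiff_subset_sdiff subset_rfl (subset_insert _ _)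
  rw [← away_sdiff]
  intro j b hb
  have hbT : Bd G j T b := (hb.bd_of_away hyTD).mono sdiff_subset
  have hbS : Bd G j ((T \ D).erase y) b := by
    rw [erase_sdiff_eq]
    by_contra hbn
    have hb' := hb.mono away_subset_erase
    rw [erase_sdiff_eq] at hb'
    obtain ⟨rfl, h⟩ := H.small _ (lt_of_le_of_lt hsub' hss) _ _ _ _ hb' hc hbn
      fun h => hn (h.mono hsub)
    exact hn ((h.mono hsub).of_add' hbT)
  obtain ⟨C, hC, rfl⟩ := hb.lift hyTD hbS
  by_cases hCb : Bd G (j + 1) (T \ D) C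
  · exact hCb.lk
  · obtain ⟨rfl, h⟩ := H.small _ hss _ _ _ _ hC (hc.mono hsub') hCb
      fun h => hn (h.mono sdiff_subset)
    have := h.lk (v := y)
    rwa [lk_add, lk_eq_zero hc.1 (by simp), add_zero] at this

/-- Adjacent vertices carry different classes. -/
theorem Crit.not_hom_of_adj (H : Crit G T dd zz) (hu : u ∈ T) (hv : v ∈ T) (huv : G.Adj u v) :
    ¬ Hom G T (dd u) (zz u) (dd v) (zz v) := by
  rintro ⟨hd, hb⟩
  have huv' : u ≠ v := huv.ne
  have hcu := H.cyc u hu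
  have hcv := H.cyc v hv
  rw [hd] at hb hcu
  have haw : away G (T.erase v) u = away G T u := by
    ext x; simp only [mem_away, mem_erase]
    constructor
    · tauto
    · rintro ⟨h1, h2, h3⟩
      exact ⟨⟨fun e => h3 (e ▸ huv), h1⟩, h2, h3⟩
  obtain ⟨w, hw, hww⟩ := hcv.push (mem_erase.2 ⟨huv', hu⟩) (by
    intro j hj
    rw [haw]
    rw [hj] at hb hcu
    have := hb.lk (v := u)
    rwa [lk_add, lk_eq_zero hcu.1 (by simp), zero_add] at this)
  have hwn : ¬ Bd G (dd v) T w := fun h =>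
    H.nbd v hv ((hww.mono (erase_subset _ _)).of_add h)
  have hset : (T.erase v).erase u = T \ insert u {v} := by
    ext x; simp only [mem_erase, mem_sdiff, mem_insert, mem_singleton]; tauto
  rw [hset] at hw
  have := H.acyc_away_sdiff (singleton_nonempty v) (by simpa using hv) hu (by simpa using huv')
    hw hwn
  refine H.not_acyc_away hu ?_
  rwa [← away_sdiff, sdiff_singleton_eq_erase, haw] at this

/-- Two cycles of `T` that neither bound nor are homologous to `zz v` are homologous modulo
`zz v`: both come from the one class of the link of `v`. -/
theorem Crit.pivot (H : Crit G T dd zz) (hv : v ∈ T) (hc : Cyc G k T c) (hc' : Cyc G l T c')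
    (hn : ¬ Bd G k T c) (hn' : ¬ Bd G l T c') (hz : ¬ Hom G T k c (dd v) (zz v))
    (hz' : ¬ Hom G T l c' (dd v) (zz v)) :
    k = l ∧ (Bd G k T (c + c') ∨ k = dd v ∧ Bd G k T (c + c' + zz v)) := by
  have key : ∀ k c, Cyc G k T c → ¬ Bd G k T c → ¬ Hom G T k c (dd v) (zz v) →
      ∃ i, k = i + 1 ∧ ¬ Bd G i (away G T v) (lk v c) := by
    intro k c hc hn hz
    refine hc.exists_lk hv hn fun b hb hbb => ?_
    by_contra hbn
    obtain ⟨rfl, h⟩ := H.hom_of_erase hv hb hbn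
    exact hz ⟨rfl, hbb.trans' h⟩
  obtain ⟨i, rfl, hi⟩ := key _ _ hc hn hz
  obtain ⟨j, rfl, hj⟩ := key _ _ hc' hn' hz'
  obtain ⟨rfl, h⟩ := H.small _ (away_ssubset hv) _ _ _ _ hc.lk hc'.lk hi hj
  refine ⟨rfl, ?_⟩
  obtain ⟨b, hb, hbb⟩ := (hc.add hc').push hv (by
    rintro j ⟨⟩; rwa [lk_add])
  by_cases hbn : Bd G (i + 1) T b
  · exact Or.inl (hbb.of_add hbn)
  · obtain ⟨h1, h2⟩ := H.hom_of_erase hv hb hbn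
    exact Or.inr ⟨h1, hbb.trans' h2⟩

theorem Hom.symm (h : Hom G S k c l c') : Hom G S l c' k c := by
  obtain ⟨rfl, h⟩ := h
  exact ⟨rfl, h.comm⟩

theorem Hom.trans {m : ℕ} (h : Hom G S k c l c') (h' : Hom G S l c' m z) : Hom G S k c m z := by
  obtain ⟨rfl, h⟩ := h
  obtain ⟨rfl, h'⟩ := h'
  exact ⟨rfl, h.trans' h'⟩

theorem Hom.refl : Hom G S k c k c := ⟨rfl, by rw [add_self_chain]; exact Bd.zero⟩

theorem Crit.cyc' (H : Crit G T dd zz) (hv : v ∈ T) : Cyc G (dd v) T (zz v) :=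
  (H.cyc v hv).mono (erase_subset _ _)

/-- Three pairwise different vertex classes live in the same degree and add up to zero. -/
theorem Crit.three (H : Crit G T dd zz) (hu : u ∈ T) (ha : a ∈ T) (hb : b ∈ T)
    (hua : ¬ Hom G T (dd u) (zz u) (dd a) (zz a)) (hub : ¬ Hom G T (dd u) (zz u) (dd b) (zz b))
    (hab : ¬ Hom G T (dd a) (zz a) (dd b) (zz b)) :
    dd a = dd b ∧ dd a = dd u ∧ Bd G (dd a) T (zz a + zz b + zz u) := by
  obtain ⟨h1, h2⟩ := H.pivot hu (H.cyc' ha) (H.cyc' hb) (H.nbd a ha) (H.nbd b hb)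
    (fun h => hua h.symm) (fun h => hub h.symm)
  rcases h2 with h2 | h2
  · exact absurd ⟨h1, h2⟩ hab
  · exact ⟨h1, h2⟩

theorem Crit.no_four (H : Crit G T dd zz) {f : Fin 4 → V} (hf : ∀ i, f i ∈ T)
    (hne : ∀ i j, i ≠ j → ¬ Hom G T (dd (f i)) (zz (f i)) (dd (f j)) (zz (f j))) : False := by
  obtain ⟨h1, h2, h3⟩ := H.three (hf 0) (hf 1) (hf 2) (hne _ _ (by decide)) (hne _ _ (by decide))
    (hne _ _ (by decide))
  obtain ⟨h4, h5, h6⟩ := H.three (hf 0) (hf 1) (hf 3) (hne _ _ (by decide)) (hne _ _ (by decide))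
    (hne _ _ (by decide))
  refine hne 2 3 (by decide) ⟨by omega, ?_⟩
  rw [← h1]
  have := h3.add h6
  rwa [show ∀ p q r s : Finset V → ZMod 2, p + q + s + (p + r + s) = q + r + (p + p) + (s + s) from
    fun p q r s => by abel, add_self_chain, add_self_chain, add_zero, add_zero] at this

/-- There are at most three vertex classes; call them colours. -/
theorem Crit.exists_col (H : Crit G T dd zz) : ∃ col : V → ZMod 3, ∀ u ∈ T, ∀ v ∈ T,
    (col u = col v ↔ Hom G T (dd u) (zz u) (dd v) (zz v)) := by
  let s : Setoid {x // x ∈ T} :=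
    { r := fun u v => Hom G T (dd u) (zz u) (dd v) (zz v)
      iseqv := ⟨fun _ => Hom.refl, Hom.symm, Hom.trans⟩ }
  have hcard : Fintype.card (Quotient s) ≤ Fintype.card (ZMod 3) := by
    by_contra hcon
    rw [ZMod.card] at hcon
    obtain ⟨f⟩ := Function.Embedding.nonempty_of_card_le (α := Fin 4) (β := Quotient s)
      (by rw [Fintype.card_fin]; omega)
    refine H.no_four (f := fun i => (f i).out.1) (fun i => (f i).out.2) fun i j hij h => hij ?_
    apply f.injective
    rw [← Quotient.out_eq (f i), ← Quotient.out_eq (f j)]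
    exact Quotient.sound h
  obtain ⟨g⟩ := Function.Embedding.nonempty_of_card_le hcard
  refine ⟨fun x => if h : x ∈ T then g (Quotient.mk s ⟨x, h⟩) else 0, fun u hu v hv => ?_⟩
  simp only [hu, hv, dif_pos, g.injective.eq_iff]
  exact Quotient.eq (r := s)

/-- Every homology class of `T` lives in one of the two degrees attached to an edge. -/
theorem Crit.degree_edge (H : Crit G T dd zz) (hu : u ∈ T) (hv : v ∈ T) (huv : G.Adj u v)
    (hc : Cyc G k T c) (hn : ¬ Bd G k T c) : k = dd u ∨ k = dd v := by
  by_cases h : Hom G T k c (dd u) (zz u)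
  · exact Or.inl h.1
  · exact Or.inr (H.pivot hu hc (H.cyc' hv) hn (H.nbd v hv) h
      (fun h' => H.not_hom_of_adj hu hv huv h'.symm)).1

/-- If the vertices of `B` all carry the same class, of the top degree `e`, then this class is
represented by a cycle avoiding all of `B`. -/
theorem Crit.flag (H : Crit G T dd zz) {e : ℕ}
    (hmax : ∀ k c, Cyc G k T c → ¬ Bd G k T c → k ≤ e) (B : Finset V) :
    B ⊆ T → B.Nonempty → (∀ x ∈ B, dd x = e) →
    (∀ x ∈ B, ∀ y ∈ B, Hom G T (dd x) (zz x) (dd y) (zz y)) →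
    ∃ w, Cyc G e (T \ B) w ∧ ¬ Bd G e T w := by
  induction B using Finset.strongInduction with
  | H B ih =>
  intro hBT ⟨y, hyB⟩ he hhom
  have hy := hBT hyB
  by_cases hB' : (B.erase y).Nonempty
  swap
  · have : B = {y} := by
      rw [not_nonempty_iff_eq_empty, erase_eq_empty_iff] at hB'
      exact hB'.resolve_left (ne_empty_of_mem hyB)
    refine ⟨zz y, ?_, ?_⟩
    · rw [this, sdiff_singleton_eq_erase, ← he y hyB]; exact H.cyc y hy
    · rw [← he y hyB]; exact H.nbd y hy
  have ih' : ∀ D ⊂ B, D.Nonempty → ∃ w, Cyc G e (T \ D) w ∧ ¬ Bd G e T w := fun D hD hne =>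
    ih D hD (hD.1.trans hBT) hne (fun x hx => he x (hD.1 hx))
      (fun x hx y hy => hhom x (hD.1 hx) y (hD.1 hy))
  obtain ⟨w, hw, hwn⟩ := ih' _ (erase_ssubset hyB) hB'
  have hins : insert y (B.erase y) = B := insert_erase hyB
  have hyS : y ∈ T \ B.erase y := by simp [hy]
  obtain ⟨x, hx⟩ := hB'
  have hxB := mem_of_mem_erase hx
  have hwy : Bd G e T (w + zz y) := by
    have h1 : Hom G T e w (dd x) (zz x) := H.hom_of_erase (hBT hxB)
      (hw.mono fun t ht => mem_erase.2 ⟨fun h => (mem_sdiff.1 ht).2 (h ▸ hx),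
        (mem_sdiff.1 ht).1⟩) hwn
    exact (h1.trans (hhom x hxB y hyB)).2
  by_cases hb : ∀ j, e = j + 1 → Bd G j (away G (T \ B.erase y) y) (lk y w)
  · obtain ⟨w', hw', hww⟩ := hw.push hyS hb
    rw [erase_sdiff_eq, hins] at hw'
    exact ⟨w', hw', fun h => hwn ((hww.mono sdiff_subset).of_add h)⟩
  exfalso
  push Not at hb
  obtain ⟨j, rfl, hj⟩ := hb
  have hl := hw.lk (v := y)
  rw [away_sdiff] at hj hl
  have hlb : Bd G j (away G T y) (lk y w) := by
    have := hwy.lk (v := y)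
    rwa [lk_add, lk_eq_zero (H.cyc y hy).1 (by simp), add_zero] at this
  have hind : ∀ a ∈ B, ∀ b ∈ B, ¬ G.Adj a b := fun a ha b hb hab =>
    H.not_hom_of_adj (hBT ha) (hBT hb) hab (hhom a ha b hb)
  have hsub : B.erase y ⊆ away G T y := fun t ht => mem_away.2
    ⟨hBT (mem_of_mem_erase ht), ne_of_mem_erase ht, hind _ hyB _ (mem_of_mem_erase ht)⟩
  have hsmall : ∀ S ⊆ away G T y, Small G S := fun S hS =>
    H.small _ (lt_of_le_of_lt hS (away_ssubset hy))
  have hna := H.not_acyc_away hy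
  obtain ⟨n, hn⟩ : ∃ n, (B.erase y).card = n + 1 :=
    ⟨_, (Nat.succ_pred_eq_of_pos (card_pos.2 ⟨x, hx⟩)).symm⟩
  rcases Nat.eq_zero_or_pos n with rfl | hnpos
  · obtain ⟨t, ht⟩ := card_eq_one.1 hn
    have htA : t ∈ away G T y := hsub (by simp [ht])
    rw [ht, sdiff_singleton_eq_erase] at hj hl
    exact hna (acyc_of_dies htA (hsmall _ (erase_subset _ _)) (hsmall _ away_subset) hl hj hlb)
  · unfold Acyc at hna
    push Not at hna
    obtain ⟨i, b, hb, hbn⟩ := hna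
    have hbE := bd_erase H.small H.not_small hy (hb.mono away_subset_erase) (hb.bd_of_away hy)
    obtain ⟨C, hC, rfl⟩ := hb.lift hy hbE
    have hle := hmax _ _ hC fun h => hbn h.lk
    have := degree_shift n (away G T y) (B.erase y) j i _ _ hn hsub
      (fun a ha b hb => hind _ (mem_of_mem_erase ha) _ (mem_of_mem_erase hb)) hsmall ?_ hl hj hb hbn
    · omega
    intro D hD hDne hDB
    have hyD : y ∉ D := fun h => by simpa using hD h
    have hssub : insert y D ⊂ B := by
      refine lt_of_le_of_ne (insert_subset hyB (hD.trans (erase_subset _ _))) fun h => hDB ?_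
      rw [← h, erase_insert hyD]
    obtain ⟨w', hw', hwn'⟩ := ih' _ hssub (insert_nonempty _ _)
    exact H.acyc_away_sdiff hDne (hD.trans ((erase_subset _ _).trans hBT)) hy hyD hw' hwn'

theorem Crit.exists_adj (H : Crit G T dd zz) (hv : v ∈ T) : ∃ u ∈ T, G.Adj v u := by
  by_contra hcon
  push Not at hcon
  exact H.nbd v hv ((H.cyc' hv).bd_of_isolated hv hcon)

/-- The neighbours of a vertex of `T` cannot all carry one and the same class of top degree: this
class would be represented by a cycle of a graph in which `v` is isolated. -/
theorem Crit.not_mono (H : Crit G T dd zz) (hv : v ∈ T)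
    (hhom : ∀ u ∈ T, ∀ w ∈ T, G.Adj v u → G.Adj v w → Hom G T (dd u) (zz u) (dd w) (zz w))
    (hmax : ∀ u ∈ T, G.Adj v u → ∀ k c, Cyc G k T c → ¬ Bd G k T c → k ≤ dd u) : False := by
  obtain ⟨u, hu, hvu⟩ := H.exists_adj hv
  have hmem : ∀ x, x ∈ T.filter (G.Adj v) ↔ x ∈ T ∧ G.Adj v x := fun x => mem_filter
  obtain ⟨w, hw, hwn⟩ := H.flag (hmax u hu hvu) (T.filter (G.Adj v)) (filter_subset _ _)
    ⟨u, (hmem u).2 ⟨hu, hvu⟩⟩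
    (fun x hx => (hhom x ((hmem x).1 hx).1 u hu ((hmem x).1 hx).2 hvu).1)
    (fun x hx y hy => hhom x ((hmem x).1 hx).1 y ((hmem y).1 hy).1 ((hmem x).1 hx).2
      ((hmem y).1 hy).2)
  refine hwn ((hw.bd_of_isolated (v := v) ?_ ?_).mono sdiff_subset)
  · simp [hv]
  · intro x hx hvx
    simp only [mem_sdiff, hmem] at hx
    exact hx.2 ⟨hx.1, hvx⟩

/-- In a minimal `T` the edges can be oriented along a 3-colouring so that every vertex has an
out-neighbour. -/
theorem Crit.exists_orientation (H : Crit G T dd zz) : ∃ col : V → ZMod 3,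
    (∀ u ∈ T, ∀ v ∈ T, G.Adj u v → col u ≠ col v) ∧
    ∀ v ∈ T, ∃ u ∈ T, G.Adj v u ∧ col u = col v + 1 := by
  obtain ⟨col, hcol⟩ := H.exists_col
  have hprop : ∀ u ∈ T, ∀ v ∈ T, G.Adj u v → col u ≠ col v := fun u hu v hv huv h =>
    H.not_hom_of_adj hu hv huv ((hcol u hu v hv).1 h)
  refine ⟨col, hprop, fun v hv => ?_⟩
  -- otherwise the neighbours of a vertex of minimal degree would all carry one class of top degree
  have hdeg : ∀ a ∈ T, ∀ b ∈ T, dd a = dd b := by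
    obtain ⟨m, hm, hmin⟩ := exists_min_image T dd ⟨v, hv⟩
    by_contra hcon
    refine H.not_mono hm (fun u hu w hw hmu hmw => ?_) fun u hu hmu k c hc hn => ?_
    · by_contra huw
      obtain ⟨h1, h2, -⟩ := H.three hm hu hw (H.not_hom_of_adj hm hu hmu)
        (H.not_hom_of_adj hm hw hmw) huw
      apply hcon
      intro a ha b hb
      have h3 := H.degree_edge hm hu hmu (H.cyc' ha) (H.nbd a ha)
      have h4 := H.degree_edge hm hu hmu (H.cyc' hb) (H.nbd b hb)
      omega
    · have h3 := H.degree_edge hm hu hmu hc hn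
      have h4 := hmin u hu
      omega
  by_contra hcon
  push Not at hcon
  have hpred : ∀ u ∈ T, G.Adj v u → col u = col v + 2 := by
    intro u hu hvu
    have h1 := hcon u hu hvu
    have h2 := hprop v hv u hu hvu
    have key : ∀ p q : ZMod 3, p ≠ q + 1 → q ≠ p → p = q + 2 := by decide
    exact key _ _ h1 h2
  refine H.not_mono hv (fun u hu w hw hvu hvw => ?_) fun u hu hvu k c hc hn => ?_
  · exact (hcol u hu w hw).1 (by rw [hpred u hu hvu, hpred w hw hvw])
  · have h3 := H.degree_edge hv hu hvu hc hn
    have h4 := hdeg v hv u hu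
    omega

/-! ### Shortest directed cycles -/

/-- In a finite digraph without sinks, a closed directed walk of minimal length `n` exists, and it
has no chords. -/
theorem exists_chordless (hT : T.Nonempty) {r : V → V → Prop} (hr : ∀ v ∈ T, ∃ u ∈ T, r v u) :
    ∃ (n : ℕ) (f : ℕ → V), 0 < n ∧ Function.Periodic f n ∧ (∀ i, f i ∈ T) ∧
      (∀ i, r (f i) (f (i + 1))) ∧ ∀ i j, r (f i) (f j) → j ≡ i + 1 [MOD n] := by
  have hex : ∃ n, 0 < n ∧ ∃ f : ℕ → V, Function.Periodic f n ∧ (∀ i, f i ∈ T) ∧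
      ∀ i, r (f i) (f (i + 1)) := by
    choose! g hgT hg using hr
    obtain ⟨t, ht⟩ := hT
    have hmem : ∀ i, g^[i] t ∈ T := by
      intro i
      induction i with
      | zero => exact ht
      | succ i ih => rw [Function.iterate_succ_apply']; exact hgT _ ih
    obtain ⟨i, j, hij, hs⟩ : ∃ i j, i < j ∧ g^[i] t = g^[j] t := by
      obtain ⟨i, j, hne, h⟩ := Finite.exists_ne_map_eq_of_infinite fun i => g^[i] t
      rcases lt_or_gt_of_ne hne with h' | h'
      · exact ⟨i, j, h', h⟩
      · exact ⟨j, i, h', h.symm⟩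
    refine ⟨j - i, by omega, fun s => g^[i + s] t, fun s => ?_, fun s => hmem _, fun s => ?_⟩
    · change g^[i + (s + (j - i))] t = g^[i + s] t
      rw [show i + (s + (j - i)) = s + j by omega, add_comm i s, Function.iterate_add_apply,
        Function.iterate_add_apply, hs]
    · change r (g^[i + s] t) (g^[i + s + 1] t)
      rw [Function.iterate_succ_apply']
      exact hg _ (hmem _)
  obtain ⟨hn, f, hper, hf, hstep⟩ := Nat.find_spec hex
  set n := Nat.find hex with hndef
  refine ⟨n, f, hn, hper, hf, hstep, fun i j hij => ?_⟩
  have hmod : ∀ a b, a ≡ b [MOD n] → f a = f b := fun a b h => by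
    rw [← hper.map_mod_nat a, ← hper.map_mod_nat b, h]
  -- a chord from `f i` to `f j` closes up the segment from `f j` to `f i`
  set d := (i + (n - 1) * j) % n with hd
  have hdi : j + d ≡ i [MOD n] := by
    have h1 : j + d ≡ j + (i + (n - 1) * j) [MOD n] := (Nat.mod_modEq _ _).add_left _
    have h2 : j + (i + (n - 1) * j) = i + n * j := by
      obtain ⟨m, hm⟩ : ∃ m, n = m + 1 := ⟨n - 1, by omega⟩
      rw [hm, Nat.add_sub_cancel]; ring
    rw [h2] at h1
    exact h1.trans (by simp [Nat.ModEq])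
  have hle : n ≤ d + 1 := by
    refine Nat.find_min' hex ⟨by omega, fun t => f (j + t % (d + 1)), fun t => ?_, fun t => hf _,
      fun t => ?_⟩
    · simp
    · have hlt : t % (d + 1) < d + 1 := Nat.mod_lt _ (by omega)
      change r (f (j + t % (d + 1))) (f (j + (t + 1) % (d + 1)))
      rcases Nat.lt_or_ge (t % (d + 1)) d with h | h
      · have : (t + 1) % (d + 1) = t % (d + 1) + 1 := by
          rw [Nat.add_mod, Nat.mod_eq_of_lt (a := 1) (by omega), Nat.mod_eq_of_lt (by omega)]
        rw [this]; exact hstep _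
      · have h1 : t % (d + 1) = d := by omega
        have : (t + 1) % (d + 1) = 0 := by
          rw [← Nat.mod_add_mod, h1, Nat.mod_self]
        rw [this, h1, hmod _ _ hdi]; exact hij
  have hlt : d < n := Nat.mod_lt _ hn
  have h3 : j + (d + 1) ≡ i + 1 [MOD n] := hdi.add_right 1
  rw [show d + 1 = n by omega] at h3
  simpa [Nat.ModEq] using h3

theorem cycleGraph_adj_iff {n : ℕ} (hn : 3 ≤ n) (i j : Fin n) :
    (SimpleGraph.cycleGraph n).Adj i j ↔ (i.val + 1) % n = j.val ∨ (j.val + 1) % n = i.val := by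
  rw [SimpleGraph.cycleGraph_adj', Fin.sub_def, Fin.sub_def]
  have key : ∀ a b : ℕ, a < n → b < n → ((n - a + b) % n = 1 ↔ (a + 1) % n = b) := by
    intro a b ha hb
    have h2 : (a + 1) % n = if a + 1 = n then 0 else a + 1 := by
      split_ifs with h
      · rw [h, Nat.mod_self]
      · exact Nat.mod_eq_of_lt (by omega)
    have h1 : (n - a + b) % n = if n - a + b < n then n - a + b else b - a := by
      split_ifs with h
      · exact Nat.mod_eq_of_lt h
      · rw [Nat.mod_eq_sub_mod (by omega), Nat.mod_eq_of_lt (by omega)]; omega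
    rw [h1, h2]
    split_ifs <;> omega
  rw [or_comm]
  exact or_congr (key _ _ i.2 j.2) (key _ _ j.2 i.2)

/-- An orientation along a 3-colouring without sinks produces an induced cycle of length divisible
by three. -/
theorem not_ternary_of_orientation (hT : T.Nonempty) {col : V → ZMod 3}
    (hcol : ∀ u ∈ T, ∀ v ∈ T, G.Adj u v → col u ≠ col v)
    (hout : ∀ v ∈ T, ∃ u ∈ T, G.Adj v u ∧ col u = col v + 1) : ¬ G.Ternary := by
  intro htern
  obtain ⟨n, f, hn, hper, hf, hstep, hch⟩ := exists_chordless hT hout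
  have hc : ∀ i : ℕ, col (f i) = col (f 0) + i := by
    intro i
    induction i with
    | zero => simp
    | succ i ih => rw [(hstep i).2, ih]; push_cast; ring
  have h3 : 3 ∣ n := by
    have h := hc n
    have h0 := hper 0
    rw [zero_add] at h0
    rw [h0] at h
    exact (ZMod.natCast_eq_zero_iff n 3).1 (left_eq_add.1 h)
  have hn3 : 3 ≤ n := Nat.le_of_dvd hn h3
  have hinj : ∀ i j : Fin n, f i = f j → i = j := by
    intro i j h
    have h1 := hch i (j + 1) (by rw [h]; exact hstep j)
    have h2 : (j : ℕ) ≡ i [MOD n] := Nat.ModEq.add_right_cancel' 1 h1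
    exact Fin.ext (Nat.ModEq.eq_of_lt_of_lt h2 j.2 i.2).symm
  have hsucc : ∀ i j : Fin n, (i.val + 1) % n = j.val → G.Adj (f i) (f j) := by
    intro i j h
    rw [← h, hper.map_mod_nat]
    exact (hstep i).1
  have hback : ∀ i j : Fin n, G.Adj (f i) (f j) → col (f j) = col (f i) + 1 →
      (i.val + 1) % n = j.val := by
    intro i j h h'
    have h1 := hch i j ⟨h, h'⟩
    rw [← h1, Nat.mod_eq_of_lt j.2]
  refine (htern n hn3 h3).false ⟨⟨fun i => f i, fun i j h => hinj i j h⟩, fun {i j} => ?_⟩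
  rw [cycleGraph_adj_iff hn3]
  constructor
  · intro h
    have hne := hcol _ (hf i) _ (hf j) h
    have key : ∀ p q : ZMod 3, p ≠ q → q = p + 1 ∨ p = q + 1 := by decide
    rcases key _ _ hne with h' | h'
    · exact Or.inl (hback i j h h')
    · exact Or.inr (hback j i h.symm h')
  · rintro (h | h)
    · exact hsucc i j h
    · exact (hsucc j i h).symm

/-- In a ternary graph every induced subgraph has total Betti number at most one. -/
theorem small_of_ternary (hG : G.Ternary) (S : Finset V) : Small G S := by
  induction S using Finset.strongInduction with
  | H T ih =>
  by_contra hn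
  obtain ⟨dd, zz, H⟩ := exists_crit ih hn
  have hT : T.Nonempty := by
    rw [nonempty_iff_ne_empty]
    rintro rfl
    -- the only chains on the empty vertex set are the multiples of the empty simplex
    apply hn
    intro k l c c' hc hc' hcn hcn'
    have key : ∀ k c, Cyc G k ∅ c → ¬ Bd G k ∅ c → k = 0 ∧ c = fun A => if A = ∅ then 1 else 0 := by
      intro k c hc hcn
      have h0 : ∃ A, c A ≠ 0 := by
        by_contra h
        push Not at h
        exact hcn (by rw [show c = 0 from funext h]; exact Bd.zero)
      have hsub : ∀ A, c A ≠ 0 → A = ∅ := fun A hA => subset_empty.1 (hc.1 A hA).1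
      obtain ⟨A, hA⟩ := h0
      have hA0 := hsub A hA
      subst hA0
      refine ⟨(hc.1 _ hA).2.1.symm.trans card_empty, funext fun A => ?_⟩
      split_ifs with h
      · subst h
        have : ∀ p : ZMod 2, p ≠ 0 → p = 1 := by decide
        exact this _ hA
      · by_contra hA'; exact h (hsub A hA')
    obtain ⟨rfl, rfl⟩ := key _ _ hc hcn
    obtain ⟨rfl, rfl⟩ := key _ _ hc' hcn'
    exact ⟨rfl, by rw [add_self_chain]; exact Bd.zero⟩
  obtain ⟨col, h1, h2⟩ := H.exists_orientation
  exact not_ternary_of_orientation hT h1 h2 hG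

/-! ### The signed count as an Euler characteristic -/

/-- The signed number of independent sets of `G[S]`, with the independent sets viewed as subsets
of `V`. -/
noncomputable def eps (G : SimpleGraph V) (S : Finset V) : ℤ :=
  ∑ A ∈ S.powerset, if (∀ a ∈ A, ∀ b ∈ A, a ≠ b → ¬ G.Adj a b) then (-1 : ℤ) ^ A.card else 0

theorem eps_empty : eps G ∅ = 1 := by simp [eps]

/-- Independent sets of `G[S]` containing `v` correspond to independent sets of `G[S - N[v]]`. -/
theorem eps_rec (hv : v ∈ S) : eps G S = eps G (S.erase v) - eps G (away G S v) := by
  unfold eps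
  conv_lhs => rw [← insert_erase hv, sum_powerset_insert (notMem_erase v S)]
  rw [sub_eq_add_neg, ← sum_neg_distrib]
  congr 1
  symm
  rw [← sum_subset (powerset_mono.2 (away_subset_erase (G := G) (S := S) (v := v)))]
  · refine sum_congr rfl fun A hA => ?_
    rw [mem_powerset] at hA
    have hvA : v ∉ A := fun h => by simpa [mem_away] using hA h
    have hiff : (∀ a ∈ insert v A, ∀ b ∈ insert v A, a ≠ b → ¬ G.Adj a b) ↔
        ∀ a ∈ A, ∀ b ∈ A, a ≠ b → ¬ G.Adj a b := by
      have hvx : ∀ x ∈ A, ¬ G.Adj v x := fun x hx => (mem_away.1 (hA hx)).2.2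
      refine ⟨fun h a ha b hb => h a (mem_insert_of_mem ha) b (mem_insert_of_mem hb), ?_⟩
      intro h a ha b hb hab
      rcases mem_insert.1 ha with rfl | ha1 <;> rcases mem_insert.1 hb with rfl | hb1
      · exact absurd rfl hab
      · exact hvx b hb1
      · exact fun e => hvx a ha1 e.symm
      · exact h a ha1 b hb1 hab
    rw [card_insert_of_notMem hvA, pow_succ]
    simp only [hiff]
    split_ifs <;> ring
  · intro A hA hA'
    rw [mem_powerset] at hA hA'
    refine if_neg fun h => hA' fun x hx => ?_
    have hxv := mem_erase.1 (hA hx)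
    exact mem_away.2 ⟨hxv.2, hxv.1, h v (mem_insert_self _ _) x (mem_insert_of_mem hx) hxv.1.symm⟩

theorem signedIndepCount_eq [Fintype ((S : Set V) : Type _)] :
    signedIndepCount (G.induce (S : Set V)) = eps G S := by
  unfold signedIndepCount eps
  rw [← sum_filter]
  refine sum_nbij (fun A => A.map (Function.Embedding.subtype _)) ?_ ?_ ?_ ?_
  · intro A hA
    simp only [mem_filter, mem_univ, true_and, mem_powerset] at hA ⊢
    constructor
    · intro x hx
      obtain ⟨y, -, rfl⟩ := mem_map.1 hx
      exact y.2
    · intro a ha b hb hab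
      obtain ⟨a', ha', rfl⟩ := mem_map.1 ha
      obtain ⟨b', hb', rfl⟩ := mem_map.1 hb
      exact hA a' ha' b' hb' (fun h => hab (by rw [h]))
  · exact (map_injective _).injOn
  · intro B hB
    simp only [coe_filter, mem_powerset, Set.mem_ofPred_eq] at hB
    refine ⟨B.subtype (· ∈ (S : Set V)), ?_, subtype_map_of_mem fun x hx => hB.1 hx⟩
    simp only [coe_filter, mem_univ, true_and, Set.mem_ofPred_eq, mem_subtype]
    exact fun a ha b hb hab => hB.2 a ha b hb fun h => hab (Subtype.ext h)
  · intro A _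
    rw [card_map]

/-- Euler–Poincaré for the complexes at hand: if every induced subgraph of `G[S]` has total Betti
number at most one, the signed count is `0` or, with a class in degree `k`, equal to `(-1) ^ k`. -/
theorem eps_of_small (S : Finset V) : (∀ S' ⊆ S, Small G S') →
    (Acyc G S ∧ eps G S = 0) ∨
      ∃ k c, Cyc G k S c ∧ ¬ Bd G k S c ∧ eps G S = (-1) ^ k := by
  induction S using Finset.strongInduction with
  | H S ih =>
  intro hS
  rcases S.eq_empty_or_nonempty with rfl | ⟨v, hv⟩
  · refine Or.inr ⟨0, fun A => if A = ∅ then 1 else 0, ⟨fun A hA => ?_, ?_⟩, ?_,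
      by simp [eps_empty]⟩
    · have : A = ∅ := by by_contra h; simp [h] at hA
      subst this; simp
    · funext A; simp [bdry]
    · rintro ⟨b, hb, hbb⟩
      have hb0 : b = 0 := by
        funext A
        by_contra hA
        have h := hb A hA
        have h1 := subset_empty.1 h.1
        rw [h1] at h
        simpa using h.2.1
      have := congrFun hbb ∅
      simp [hb0, bdry] at this
  have hE := erase_subset v S
  have hA := away_subset (G := G) (S := S) (v := v)
  have hAE := away_subset_erase (G := G) (S := S) (v := v)
  rw [eps_rec hv]
  have hsS := hS S subset_rfl
  rcases ih _ (erase_ssubset hv) fun S' h => hS S' (h.trans hE) with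
    ⟨h1, e1⟩ | ⟨k, z, hz, hzn, e1⟩ <;>
  rcases ih _ (away_ssubset hv) fun S' h => hS S' (h.trans hA) with
    ⟨h2, e2⟩ | ⟨l, y, hy, hyn, e2⟩
  · refine Or.inl ⟨fun j c hc => ?_, by rw [e1, e2, sub_zero]⟩
    obtain ⟨c', hc', hcc⟩ := hc.push hv (by rintro i rfl; exact h2 _ _ hc.lk)
    exact hcc.of_add ((h1 _ _ hc').mono hE)
  · obtain ⟨C, hC, rfl⟩ := hy.lift hv (h1 _ _ (hy.mono hAE))
    exact Or.inr ⟨l + 1, C, hC, fun h => hyn h.lk, by rw [e1, e2, pow_succ]; ring⟩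
  · refine Or.inr ⟨k, z, hz.mono hE, fun h => ?_, by rw [e1, e2, sub_zero]⟩
    obtain ⟨y, hy, hyz⟩ := h.pull hz
    exact hzn (hyz.of_add ((h2 _ _ hy).mono hAE))
  · -- both `S - v` and the link carry a class: the two must cancel
    have hzS : Bd G k S z := by
      by_contra hzS
      by_cases hyE : Bd G l (S.erase v) y
      · obtain ⟨C, hC, rfl⟩ := hy.lift hv hyE
        obtain ⟨rfl, h⟩ := hsS _ _ _ _ hC (hz.mono hE) (fun h => hyn h.lk) hzS
        have := h.lk (v := v)
        rw [lk_add, lk_eq_zero hz.1 (by simp), add_zero] at this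
        exact hyn this
      · obtain ⟨rfl, h⟩ := hS _ hE _ _ _ _ (hy.mono hAE) hz hyE hzn
        exact hzS ((h.mono hE).of_add' (hy.bd_of_away hv))
    refine Or.inl ⟨acyc_of_dies hv (hS _ hE) (hS _ hA) hz hzn hzS, ?_⟩
    obtain ⟨y', hy', hyz⟩ := hzS.pull hz
    have hy'n : ¬ Bd G k (away G S v) y' := fun h => hzn (hyz.of_add (h.mono hAE))
    obtain ⟨rfl, -⟩ := hS _ hA _ _ _ _ hy hy' hyn hy'n
    rw [e1, e2, sub_self]

theorem abs_eps_le (hG : G.Ternary) (S : Finset V) : |eps G S| ≤ 1 := by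
  rcases eps_of_small S fun S' _ => small_of_ternary hG S' with ⟨-, h⟩ | ⟨k, -, -, -, h⟩
  · simp [h]
  · rw [h, abs_pow]; simp

/-! ### Cycles of length divisible by three -/

/-- The signed count of the path with `m` vertices. -/
def pathCount : ℕ → ℤ
  | 0 => 1
  | 1 => 0
  | m + 2 => pathCount (m + 1) - pathCount m

theorem pathCount_three_mul (q : ℕ) :
    pathCount (3 * q) = (-1) ^ q ∧ pathCount (3 * q + 1) = 0 := by
  induction q with
  | zero => simp [pathCount]
  | succ q ih =>
    have h2 : pathCount (3 * q + 2) = -(-1) ^ q := by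
      rw [pathCount, ih.1, ih.2]; ring
    have h3 : pathCount (3 * q + 3) = -(-1) ^ q := by
      rw [pathCount, h2, ih.2]; ring
    have h4 : pathCount (3 * q + 4) = 0 := by
      rw [pathCount, h3, h2]; ring
    exact ⟨by rw [show 3 * (q + 1) = 3 * q + 3 by ring, h3, pow_succ]; ring,
      by rw [show 3 * (q + 1) + 1 = 3 * q + 4 by ring, h4]⟩

variable {n : ℕ} {F : ℕ → V}

/-- A segment of an induced cycle that misses a vertex induces a path. -/
theorem eps_segment (hinj : ∀ i j, i < n → j < n → F i = F j → i = j)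
    (hadj : ∀ i j, i < n → j < n → (G.Adj (F i) (F j) ↔
      i + 1 = j ∨ j + 1 = i ∨ (i = 0 ∧ j + 1 = n) ∨ (j = 0 ∧ i + 1 = n)))
    (a m : ℕ) (h1 : a + m ≤ n) (h2 : m < n) :
    eps G ((Ico a (a + m)).image F) = pathCount m := by
  induction m using Nat.strong_induction_on with
  | _ m ih =>
  have hE : ∀ m, a + (m + 1) ≤ n →
      ((Ico a (a + (m + 1))).image F).erase (F (a + m)) = (Ico a (a + m)).image F := by
    intro m hm
    ext x
    simp only [mem_erase, mem_image, mem_Ico]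
    constructor
    · rintro ⟨hx, i, hi, rfl⟩
      refine ⟨i, ⟨hi.1, ?_⟩, rfl⟩
      have : i ≠ a + m := fun h => hx (by rw [h])
      omega
    · rintro ⟨i, hi, rfl⟩
      refine ⟨fun h => ?_, i, ⟨hi.1, by omega⟩, rfl⟩
      have := hinj _ _ (by omega) (by omega) h
      omega
  match m, ih, h1, h2 with
  | 0, _, _, _ => simp [eps_empty, pathCount]
  | 1, ih, h1, h2 =>
    rw [eps_rec (v := F a) (mem_image_of_mem F (by simp)), pathCount]
    have := hE 0 h1
    simp only [add_zero] at this
    have h3 : away G ((Ico a (a + 1)).image F) (F a) = ∅ := by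
      ext x
      simp only [mem_away, mem_image, mem_Ico, notMem_empty, iff_false]
      rintro ⟨⟨i, hi, rfl⟩, h, -⟩
      exact h (by rw [show i = a by omega])
    simp only [zero_add] at this
    rw [this, h3]; simp
  | m + 2, ih, h1, h2 =>
    rw [eps_rec (v := F (a + (m + 1))) (mem_image_of_mem F (by simp)), pathCount]
    rw [hE (m + 1) (by omega), ih (m + 1) (by omega) (by omega) (by omega),
      ← ih m (by omega) (by omega) (by omega)]
    congr 2
    ext x
    simp only [mem_away, mem_image, mem_Ico]
    constructor
    · rintro ⟨⟨i, hi, rfl⟩, hx, hx'⟩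
      rw [hadj _ _ (by omega) (by omega)] at hx'
      have : i ≠ a + (m + 1) := fun h => hx (by rw [h])
      exact ⟨i, ⟨hi.1, by omega⟩, rfl⟩
    · rintro ⟨i, hi, rfl⟩
      refine ⟨⟨i, ⟨hi.1, by omega⟩, rfl⟩, fun h => ?_, ?_⟩
      · have := hinj _ _ (by omega) (by omega) h
        omega
      · rw [hadj _ _ (by omega) (by omega)]
        omega

theorem eps_cycle (hn : 3 ≤ n) (hinj : ∀ i j, i < n → j < n → F i = F j → i = j)
    (hadj : ∀ i j, i < n → j < n → (G.Adj (F i) (F j) ↔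
      i + 1 = j ∨ j + 1 = i ∨ (i = 0 ∧ j + 1 = n) ∨ (j = 0 ∧ i + 1 = n))) :
    eps G ((range n).image F) = pathCount (n - 1) - pathCount (n - 3) := by
  rw [eps_rec (v := F (n - 1)) (mem_image_of_mem F (mem_range.2 (by omega))),
    ← eps_segment hinj hadj 0 (n - 1) (by omega) (by omega),
    ← eps_segment hinj hadj 1 (n - 3) (by omega) (by omega)]
  congr 2
  · ext x
    simp only [mem_erase, mem_image, mem_Ico, mem_range]
    constructor
    · rintro ⟨hx, i, hi, rfl⟩
      have : i ≠ n - 1 := fun h => hx (by rw [h])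
      exact ⟨i, ⟨by omega, by omega⟩, rfl⟩
    · rintro ⟨i, hi, rfl⟩
      refine ⟨fun h => ?_, i, by omega, rfl⟩
      have := hinj _ _ (by omega) (by omega) h
      omega
  · ext x
    simp only [mem_away, mem_image, mem_Ico, mem_range]
    constructor
    · rintro ⟨⟨i, hi, rfl⟩, hx, hx'⟩
      rw [hadj _ _ (by omega) (by omega)] at hx'
      have : i ≠ n - 1 := fun h => hx (by rw [h])
      exact ⟨i, ⟨by omega, by omega⟩, rfl⟩
    · rintro ⟨i, hi, rfl⟩
      refine ⟨⟨i, by omega, rfl⟩, fun h => ?_, ?_⟩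
      · have := hinj _ _ (by omega) (by omega) h
        omega
      · rw [hadj _ _ (by omega) (by omega)]
        omega

/-- An induced cycle of length divisible by three has signed count `2` or `-2`. -/
theorem ternary_of_abs_eps_le (h : ∀ S, |eps G S| ≤ 1) : G.Ternary := by
  intro n hn h3
  refine ⟨fun f => ?_⟩
  let F : ℕ → V := fun i => f ⟨i % n, Nat.mod_lt _ (by omega)⟩
  have hF : ∀ i (hi : i < n), F i = f ⟨i, hi⟩ := fun i hi => by
    simp only [F, Nat.mod_eq_of_lt hi]
  have hinj : ∀ i j, i < n → j < n → F i = F j → i = j := by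
    intro i j hi hj hij
    rw [hF i hi, hF j hj] at hij
    exact congrArg Fin.val (f.injective hij)
  have hmod : ∀ i < n, (i + 1) % n = if i + 1 = n then 0 else i + 1 := by
    intro i hi
    split_ifs with h
    · rw [h, Nat.mod_self]
    · exact Nat.mod_eq_of_lt (by omega)
  have hadj : ∀ i j, i < n → j < n → (G.Adj (F i) (F j) ↔
      i + 1 = j ∨ j + 1 = i ∨ (i = 0 ∧ j + 1 = n) ∨ (j = 0 ∧ i + 1 = n)) := by
    intro i j hi hj
    rw [hF i hi, hF j hj, f.map_adj_iff, cycleGraph_adj_iff hn]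
    simp only [hmod i hi, hmod j hj]
    split_ifs <;> omega
  have hle := h ((range n).image F)
  obtain ⟨q, rfl⟩ : ∃ q, n = 3 * q + 3 := by
    obtain ⟨m, rfl⟩ := h3
    exact ⟨m - 1, by omega⟩
  obtain ⟨h0, h1⟩ := pathCount_three_mul q
  rw [eps_cycle hn hinj hadj, show 3 * q + 3 - 1 = 3 * q + 2 by omega, Nat.add_sub_cancel,
    pathCount, h0, h1, show (0 : ℤ) - (-1) ^ q - (-1) ^ q = -2 * (-1) ^ q by ring, abs_mul,
    abs_pow] at hle
  norm_num at hle

end KalaiMeshulam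

theorem stmt_0 {V : Type*} [Fintype V] (G : SimpleGraph V) :
    G.Ternary ↔ ∀ S : Finset V, |signedIndepCount (G.induce (S : Set V))| ≤ 1 := by
  constructor
  · intro hG S
    rw [KalaiMeshulam.signedIndepCount_eq]
    exact KalaiMeshulam.abs_eps_le hG S
  · intro h
    refine KalaiMeshulam.ternary_of_abs_eps_le fun S => ?_
    rw [← KalaiMeshulam.signedIndepCount_eq]
    exact h S
end

section
/- For every integer m ≥ 1, the cycle graph C_{3m+2} on 3m+2 vertices satisfies ε(C_{3m+2}) = (−1)^{m+1}. -/
open Finset Classical in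
/-- The signed count of the independent sets of `G` contained in `S`, i.e. `ε` of the subgraph of
`G` induced on `S`. -/
noncomputable def indepSum {V : Type*} (G : SimpleGraph V) (S : Finset V) : ℤ :=
  ∑ A ∈ S.powerset,
    if (∀ a ∈ A, ∀ b ∈ A, a ≠ b → ¬ G.Adj a b) then (-1 : ℤ) ^ A.card else 0

open Classical in
lemma indepSum_univ {V : Type*} [Fintype V] (G : SimpleGraph V) :
    signedIndepCount G = indepSum G Finset.univ := by
  rw [signedIndepCount, indepSum, Finset.sum_filter, Finset.powerset_univ]
  congr!

lemma indepSum_empty {V : Type*} (G : SimpleGraph V) : indepSum G ∅ = 1 := by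
  simp [indepSum]

open Classical in
/-- The vertex deletion recurrence. -/
lemma indepSum_insert {V : Type*} (G : SimpleGraph V) (S : Finset V) (v : V) (hv : v ∉ S) :
    indepSum G (insert v S) = indepSum G S - indepSum G (S.filter (fun x => ¬ G.Adj v x)) := by
  unfold indepSum
  rw [Finset.sum_powerset_insert hv, sub_eq_add_neg, ← Finset.sum_neg_distrib]
  congr 1
  -- Subsets of `S` meeting the neighbourhood of `v` contribute zero to the sum over `insert v t`.
  symm
  refine Finset.sum_subset_zero_on_sdiff
    (Finset.powerset_mono.2 (Finset.filter_subset (fun x => ¬ G.Adj v x) S)) ?_ ?_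
  · intro t ht
    simp only [Finset.mem_sdiff, Finset.mem_powerset] at ht
    obtain ⟨htS, hn⟩ := ht
    rw [if_neg]
    intro h
    apply hn
    intro x hx
    rw [Finset.mem_filter]
    exact ⟨htS hx, h v (Finset.mem_insert_self _ _) x (Finset.mem_insert_of_mem hx)
      (fun e => hv (e ▸ htS hx))⟩
  · intro t ht
    rw [Finset.mem_powerset] at ht
    have hna : ∀ x ∈ t, ¬ G.Adj v x := fun x hx => (Finset.mem_filter.1 (ht hx)).2
    have hvt : v ∉ t := fun h => hv (Finset.mem_filter.1 (ht h)).1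
    have hiff : (∀ a ∈ insert v t, ∀ b ∈ insert v t, a ≠ b → ¬ G.Adj a b) ↔
        (∀ a ∈ t, ∀ b ∈ t, a ≠ b → ¬ G.Adj a b) := by
      constructor
      · intro h a ha b hb
        exact h a (Finset.mem_insert_of_mem ha) b (Finset.mem_insert_of_mem hb)
      · intro h a ha b hb hab
        rcases Finset.mem_insert.1 ha with rfl | hat
        · exact hna b (Finset.mem_of_mem_insert_of_ne hb hab.symm)
        · rcases Finset.mem_insert.1 hb with rfl | hbt
          · exact fun e => hna a hat e.symm
          · exact h a hat b hbt hab
    simp only [hiff, Finset.card_insert_of_notMem hvt]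
    split_ifs <;> ring

/-- `indepSum_insert` with the sets `S ∪ {v}` and `S \ N(v)` given by their membership predicates. -/
lemma indepSum_delete {V : Type*} (G : SimpleGraph V) {S T R : Finset V} (v : V) (hv : v ∉ S)
    (hT : ∀ x, x ∈ T ↔ x = v ∨ x ∈ S) (hR : ∀ x, x ∈ R ↔ x ∈ S ∧ ¬ G.Adj v x) :
    indepSum G T = indepSum G S - indepSum G R := by
  classical
  obtain rfl : T = insert v S := by
    ext x
    rw [hT, Finset.mem_insert]
  obtain rfl : R = S.filter (fun x => ¬ G.Adj v x) := by
    ext x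
    rw [hR, Finset.mem_filter]
  convert indepSum_insert G S v hv

/-- The value of `ε` on the path with `k` vertices, defined by its recurrence. -/
def pathCount : ℕ → ℤ
  | 0 => 1
  | 1 => 0
  | k + 2 => pathCount (k + 1) - pathCount k

lemma pathCount_add_three (k : ℕ) : pathCount (k + 3) = - pathCount k := by
  simp [pathCount]

lemma pathCount_three_mul_add (m r : ℕ) :
    pathCount (3 * m + r) = (-1) ^ m * pathCount r := by
  induction m with
  | zero => simp
  | succ m ih =>
    rw [show 3 * (m + 1) + r = 3 * m + r + 3 by ring, pathCount_add_three, ih]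
    ring

lemma cycleGraph_adj_iff_val {N : ℕ} (hN : 1 ≤ N) (u v : Fin (N + 1)) :
    (SimpleGraph.cycleGraph (N + 1)).Adj u v ↔
      u.val + 1 = v.val ∨ v.val + 1 = u.val ∨ (u.val = 0 ∧ v.val = N) ∨
        (u.val = N ∧ v.val = 0) := by
  rw [SimpleGraph.cycleGraph_adj']
  have hu := u.isLt
  have hv := v.isLt
  rcases lt_trichotomy u.val v.val with h | h | h
  · rw [Fin.coe_sub_iff_lt.2 h, Fin.coe_sub_iff_le.2 h.le]; omega
  · rw [Fin.coe_sub_iff_le.2 h.le, Fin.coe_sub_iff_le.2 h.ge]; omega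
  · rw [Fin.coe_sub_iff_lt.2 h, Fin.coe_sub_iff_le.2 h.le]; omega

/-- The `k` consecutive vertices `a, …, a + k - 1` of the cycle on `N + 1` vertices. -/
def arc (N a k : ℕ) : Finset (Fin (N + 1)) :=
  Finset.univ.filter (fun x => a ≤ x.val ∧ x.val < a + k)

lemma mem_arc {N a k : ℕ} {x : Fin (N + 1)} : x ∈ arc N a k ↔ a ≤ x.val ∧ x.val < a + k := by
  simp [arc]

lemma arc_zero (N a : ℕ) : arc N a 0 = ∅ := by
  ext x
  simp [mem_arc]

/-- The hypothesis `a + k ≤ N` keeps the arc clear of the vertex `N`, so that it induces a path. -/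
lemma indepSum_arc {N : ℕ} (hN : 1 ≤ N) (a : ℕ) : ∀ k : ℕ, a + k ≤ N →
    indepSum (SimpleGraph.cycleGraph (N + 1)) (arc N a k) = pathCount k
  | 0, _ => by rw [arc_zero, indepSum_empty, pathCount]
  | 1, h => by
    rw [indepSum_delete (SimpleGraph.cycleGraph (N + 1)) (S := ∅) (R := ∅) ⟨a, by omega⟩
      (Finset.notMem_empty _) ?_ (by simp), sub_self, pathCount]
    intro x
    simp only [mem_arc, Fin.ext_iff, Finset.notMem_empty, or_false]
    omega
  | k + 2, h => by
    rw [pathCount, ← indepSum_arc hN a (k + 1) (by omega), ← indepSum_arc hN a k (by omega)]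
    apply indepSum_delete _ ⟨a + k + 1, by omega⟩
    · simp only [mem_arc]
      omega
    · intro x
      simp only [mem_arc, Fin.ext_iff]
      omega
    · intro x
      simp only [mem_arc, cycleGraph_adj_iff_val hN]
      omega

/-- Deleting one vertex of a cycle leaves a path; deleting its two neighbours as well leaves a path
with two fewer vertices. -/
lemma indepSum_cycleGraph (n : ℕ) :
    indepSum (SimpleGraph.cycleGraph (n + 3)) Finset.univ
      = pathCount (n + 2) - pathCount n := by
  change indepSum (SimpleGraph.cycleGraph (n + 2 + 1)) Finset.univ = _
  rw [← indepSum_arc (N := n + 2) (by omega) 0 (n + 2) (by omega),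
    ← indepSum_arc (N := n + 2) (by omega) 1 n (by omega)]
  apply indepSum_delete _ ⟨n + 2, by omega⟩
  · simp only [mem_arc]
    omega
  · intro x
    have hx := x.isLt
    simp only [mem_arc, Fin.ext_iff, Finset.mem_univ, true_iff]
    omega
  · intro x
    have hx := x.isLt
    have hadj := cycleGraph_adj_iff_val (show 1 ≤ n + 2 by omega) ⟨n + 2, by omega⟩ x
    rw [mem_arc, mem_arc, hadj]
    dsimp only
    omega

theorem stmt_3 (m : ℕ) (hm : 1 ≤ m) :
    signedIndepCount (SimpleGraph.cycleGraph (3 * m + 2)) = (-1 : ℤ) ^ (m + 1) := by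
  obtain ⟨j, rfl⟩ : ∃ j, m = j + 1 := ⟨m - 1, by omega⟩
  rw [indepSum_univ, show 3 * (j + 1) + 2 = (3 * j + 2) + 3 by ring, indepSum_cycleGraph,
    show 3 * j + 2 + 2 = 3 * (j + 1) + 1 by ring, pathCount_three_mul_add, pathCount_three_mul_add]
  simp [pathCount, pow_succ]
end

section
/- If a finite simple graph G contains no cycle of length divisible by 3 (as a subgraph, the cycle not required to be induced), then |ε(G)| ≤ 1; that is, the number of independent sets of G of even size and the number of independent sets of G of odd size differ by at most 1. -/
/-! ### Signed counts on vertex subsets -/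

open Classical in
/-- The signed independent-set count of the subgraph of `H` induced on the finite vertex set `U`.
Keeping the ambient vertex type fixed makes deletion of vertices an operation on `U` alone. -/
noncomputable def eps {V : Type*} (H : SimpleGraph V) (U : Finset V) : ℤ :=
  ∑ A ∈ U.powerset, if (∀ a ∈ A, ∀ b ∈ A, a ≠ b → ¬ H.Adj a b) then (-1 : ℤ) ^ A.card else 0

open Classical in
/-- The vertices of `U` outside the closed neighbourhood of `x`. -/
noncomputable def away {V : Type*} (H : SimpleGraph V) (U : Finset V) (x : V) : Finset V :=
  U.filter (fun y => y ≠ x ∧ ¬ H.Adj x y)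

open Classical in
/-- Deletion recurrence `ε(U) = ε(U - v) - ε(U - N[v])`, splitting the independent sets according to
whether they contain `v`. -/
lemma eps_rec {V : Type*} (H : SimpleGraph V) {U : Finset V} {v : V} (hv : v ∈ U) :
    eps H U = eps H (U.erase v) - eps H (away H U v) := by
  unfold eps
  conv_lhs => rw [← Finset.insert_erase hv]
  rw [Finset.sum_powerset_insert (Finset.notMem_erase v U), sub_eq_add_neg, ← Finset.sum_neg_distrib]
  congr 1
  symm
  apply Finset.sum_subset_zero_on_sdiff
  · intro A
    simp only [Finset.mem_powerset, away]
    intro h x hx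
    have := h hx
    simp at this ⊢
    tauto
  · intro A hA
    simp only [Finset.mem_sdiff, Finset.mem_powerset] at hA
    obtain ⟨h1, h2⟩ := hA
    rw [if_neg]
    intro h3
    apply h2
    intro x hx
    have h4 := Finset.mem_erase.1 (h1 hx)
    simp only [away, Finset.mem_filter]
    exact ⟨h4.2, h4.1, h3 v (by simp) x (by simp [hx]) h4.1.symm⟩
  · intro A hA
    have hA' : ∀ x ∈ A, x ≠ v ∧ ¬ H.Adj v x := by
      intro x hx
      have := (Finset.mem_powerset.1 hA) hx
      simp [away] at this
      tauto
    have hvA : v ∉ A := fun h => (hA' v h).1 rfl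
    rw [Finset.card_insert_of_notMem hvA, pow_succ]
    have : (∀ a ∈ insert v A, ∀ b ∈ insert v A, a ≠ b → ¬ H.Adj a b) ↔
        (∀ a ∈ A, ∀ b ∈ A, a ≠ b → ¬ H.Adj a b) := by
      constructor
      · intro h a ha b hb
        exact h a (by simp [ha]) b (by simp [hb])
      · intro h a ha b hb hab
        rcases Finset.mem_insert.1 ha with rfl | ha'
        · rcases Finset.mem_insert.1 hb with rfl | hb'
          · exact absurd rfl hab
          · exact (hA' b hb').2
        · rcases Finset.mem_insert.1 hb with rfl | hb'
          · exact fun h => (hA' a ha').2 h.symm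
          · exact h a ha' b hb' hab
    simp only [this]
    split_ifs <;> simp

open Classical in
lemma eps_congr {V : Type*} {H H' : SimpleGraph V} {U : Finset V}
    (h : ∀ a ∈ U, ∀ b ∈ U, (H.Adj a b ↔ H'.Adj a b)) : eps H U = eps H' U := by
  unfold eps
  apply Finset.sum_congr rfl
  intro A hA
  have hA := Finset.mem_powerset.1 hA
  have : (∀ a ∈ A, ∀ b ∈ A, a ≠ b → ¬ H.Adj a b) ↔
        (∀ a ∈ A, ∀ b ∈ A, a ≠ b → ¬ H'.Adj a b) := by
    constructor
    · intro g a ha b hb hab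
      rw [← h a (hA ha) b (hA hb)]; exact g a ha b hb hab
    · intro g a ha b hb hab
      rw [h a (hA ha) b (hA hb)]; exact g a ha b hb hab
  exact if_congr this rfl rfl

open Classical in
lemma signed_eq_eps {V : Type*} [Fintype V] (G : SimpleGraph V) :
    signedIndepCount G = eps G Finset.univ := by
  unfold signedIndepCount eps
  rw [Finset.sum_filter, Finset.powerset_univ]
  refine Finset.sum_congr rfl fun A _ => ?_
  congr

/-! ### Minimal violations are 2-regular -/

/-- The graph induced by `H` on `W` violates `|ε| ≤ 1`, with `ε` of sign `s`, while every smaller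
pair (fewer edges or fewer vertices) satisfies it. -/
structure Crit {V : Type*} (H : SimpleGraph V) (W : Finset V) (s : ℤ) : Prop where
  sign : s = 1 ∨ s = -1
  two_le : 2 ≤ s * eps H W
  lt : ∀ H' W', (H', W') < (H, W) → |eps H' W'| ≤ 1

namespace Crit

variable {V : Type*} {H : SimpleGraph V} {W : Finset V} {s : ℤ}

lemma ssub (c : Crit H W s) {U : Finset V} (h : U ⊂ W) : |eps H U| ≤ 1 :=
  c.lt H U (Prod.mk_lt_mk.2 (Or.inr ⟨le_rfl, h⟩))

open Classical in
lemma away_ssubset {U : Finset V} {v : V} (hv : v ∈ U) : away H U v ⊂ U := by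
  refine ⟨Finset.filter_subset _ _, fun h => ?_⟩
  have := h hv
  simp [away] at this

open Classical in
/-- Both terms of the recurrence are at most `1` in absolute value and their difference is at
least `2`, which determines them: `ε(W - v) = s` and, in `eps_away`, `ε(W - N[v]) = -s`. -/
lemma eps_erase (c : Crit H W s) {v : V} (hv : v ∈ W) : eps H (W.erase v) = s := by
  have h1 := eps_rec H hv
  have h2 := abs_le.1 (c.ssub (Finset.erase_ssubset hv))
  have h3 := abs_le.1 (c.ssub (away_ssubset (H := H) hv))
  have h4 := c.two_le
  rcases c.sign with rfl | rfl <;> omega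

open Classical in
lemma eps_away (c : Crit H W s) {v : V} (hv : v ∈ W) : eps H (away H W v) = -s := by
  have h1 := eps_rec H hv
  have h2 := abs_le.1 (c.ssub (Finset.erase_ssubset hv))
  have h3 := abs_le.1 (c.ssub (away_ssubset (H := H) hv))
  have h4 := c.two_le
  rcases c.sign with rfl | rfl <;> omega

open Classical in
lemma eps_erase_erase (c : Crit H W s) {v x : V} (hv : v ∈ W) (hx : x ∈ W) (h : H.Adj v x) :
    eps H ((W.erase v).erase x) = 0 := by
  have h1 := eps_rec H (Finset.mem_erase.2 ⟨h.ne', hx⟩)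
  have h2 : away H (W.erase v) x = away H W x := by
    ext y
    simp only [away, Finset.mem_filter, Finset.mem_erase]
    constructor
    · tauto
    · rintro ⟨a, b, d⟩
      refine ⟨⟨?_, a⟩, b, d⟩
      rintro rfl
      exact d h.symm
  rw [h2, c.eps_away hx, c.eps_erase hv] at h1
  omega

open Classical in
/-- If `M` is a proper subset of the neighbourhood of `v`, deleting the edges from `v` to the other
neighbours gives a smaller graph, with count `s - ε(W - v - M)`; this must lie in `[-1, 1]`. -/
lemma eps_sdiff_range (c : Crit H W s) {v : V} (hv : v ∈ W) {M : Finset V}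
    (hM : M ⊂ W.filter (H.Adj v)) : eps H (W.erase v \ M) = 0 ∨ eps H (W.erase v \ M) = s := by
  let H' : SimpleGraph V :=
    { Adj := fun a b => H.Adj a b ∧ (a = v → b ∈ M) ∧ (b = v → a ∈ M)
      symm := ⟨fun a b h => ⟨h.1.symm, h.2.2, h.2.1⟩⟩
      loopless := ⟨fun a h => H.loopless.1 a h.1⟩ }
  have hlt : H' < H := by
    refine lt_of_le_not_ge (fun a b h => h.1) fun hle => ?_
    obtain ⟨x, hx, hxM⟩ := Finset.exists_of_ssubset hM
    exact hxM ((hle (Finset.mem_filter.1 hx).2).2.1 rfl)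
  have h1 := abs_le.1 (c.lt H' W (Prod.mk_lt_mk.2 (Or.inl ⟨hlt, le_rfl⟩)))
  rw [eps_rec H' hv] at h1
  have hvM : v ∉ M := fun h => H.loopless.1 v (Finset.mem_filter.1 (hM.1 h)).2
  have h2 : away H' W v = W.erase v \ M := by
    ext y
    have := fun h => (Finset.mem_filter.1 (@hM.1 y h)).2
    simp only [away, Finset.mem_filter, Finset.mem_erase, Finset.mem_sdiff, H']
    constructor
    · rintro ⟨a, b, d⟩
      exact ⟨⟨b, a⟩, fun h => d ⟨this h, fun _ => h, fun h => absurd h b⟩⟩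
    · rintro ⟨⟨a, b⟩, d⟩
      exact ⟨b, a, fun h => d (h.2.1 trivial)⟩
  have h3 : ∀ U : Finset V, v ∉ U → eps H' U = eps H U := by
    intro U hU
    apply eps_congr
    intro a ha b hb
    have : a ≠ v := fun h => hU (h ▸ ha)
    have : b ≠ v := fun h => hU (h ▸ hb)
    simp only [H']
    tauto
  rw [h2, h3 _ (by simp), h3 _ (by simp), c.eps_erase hv] at h1
  have h4 : W.erase v \ M ⊂ W :=
    lt_of_le_of_lt Finset.sdiff_subset (Finset.erase_ssubset hv)
  have h5 := abs_le.1 (c.ssub h4)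
  rcases c.sign with rfl | rfl <;> omega

open Classical in
lemma away_eq {v : V} :
    away H W v = W.erase v \ W.filter (H.Adj v) := by
  ext y
  simp only [away, Finset.mem_filter, Finset.mem_erase, Finset.mem_sdiff]
  tauto

open Classical in
lemma eps_sdiff_nbr (c : Crit H W s) {v : V} (hv : v ∈ W) :
    eps H (W.erase v \ W.filter (H.Adj v)) = -s := by
  rw [← away_eq, c.eps_away hv]

open Classical in
lemma eps_sdiff_nbr_erase (c : Crit H W s) {v x : V} (hv : v ∈ W) (hx : x ∈ W)
    (h : H.Adj v x) : eps H (W.erase v \ (W.filter (H.Adj v)).erase x) = 0 := by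
  have hxN : x ∈ W.filter (H.Adj v) := Finset.mem_filter.2 ⟨hx, h⟩
  have h1 := c.eps_sdiff_range hv (Finset.erase_ssubset hxN)
  have hxU : x ∈ W.erase v \ (W.filter (H.Adj v)).erase x := by
    simp [hx, h.ne']
  have h2 := eps_rec H hxU
  have h3 : (W.erase v \ (W.filter (H.Adj v)).erase x).erase x
      = W.erase v \ W.filter (H.Adj v) := by
    ext y
    simp only [Finset.mem_filter, Finset.mem_erase, Finset.mem_sdiff]
    by_cases hy : y = x
    · subst hy; tauto
    · tauto
  have h4 : away H (W.erase v \ (W.filter (H.Adj v)).erase x) x ⊂ W :=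
    lt_of_lt_of_le (away_ssubset hxU) (Finset.sdiff_subset.trans (Finset.erase_subset _ _))
  have h5 := abs_le.1 (c.ssub h4)
  rw [h3, c.eps_sdiff_nbr hv] at h2
  rcases c.sign with rfl | rfl <;> omega

open Classical in
/-- `ε(W - v - M) = 0` for every nonempty proper subset `M` of the neighbourhood of `v`. Only the
value `s` has to be excluded. When `x` is added to `M`, the graph keeping `v` but losing `M` and the
closed neighbourhood of `x` in `W - v` has count `ε(W - v - (M ∪ {x})) + s`. -/
lemma eps_sdiff_eq_zero (c : Crit H W s) {v : V} (hv : v ∈ W) (M : Finset V) :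
    M ⊂ W.filter (H.Adj v) → M.Nonempty → eps H (W.erase v \ M) = 0 := by
  induction M using Finset.induction_on with
  | empty => intro _ h; exact absurd h (by simp)
  | insert x M hxM ih =>
    intro hM _
    have hxW := Finset.mem_filter.1 (hM.1 (Finset.mem_insert_self x M))
    rcases M.eq_empty_or_nonempty with rfl | hne
    · have := c.eps_erase_erase hv hxW.1 hxW.2
      rwa [Finset.erase_eq (W.erase v)] at this
    have hMN : M ⊂ W.filter (H.Adj v) :=
      lt_of_le_of_lt (Finset.subset_insert x M) hM
    have h0 := ih hMN hne
    have h1 := c.eps_sdiff_range hv hM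
    have hxv : x ≠ v := hxW.2.ne'
    set Q := insert v (away H (W.erase v \ M) x) with hQ
    have hvQ : v ∈ Q := Finset.mem_insert_self _ _
    have hQW : Q ⊂ W := by
      refine (Finset.ssubset_iff_of_subset ?_).2 ⟨x, hxW.1, ?_⟩
      · intro y hy
        simp only [hQ, away, Finset.mem_insert, Finset.mem_filter, Finset.mem_sdiff,
          Finset.mem_erase] at hy
        rcases hy with rfl | hy
        · exact hv
        · tauto
      · simp [hQ, away, hxv]
    have h2 := abs_le.1 (c.ssub hQW)
    have hQv : Q.erase v = away H (W.erase v \ M) x :=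
      Finset.erase_insert (by simp [away])
    have hQa : away H Q v = away H (W.erase v \ (W.filter (H.Adj v)).erase x) x := by
      ext y
      have := fun h => Finset.mem_filter.1 (@hMN.1 y h)
      simp only [hQ, away, Finset.mem_insert, Finset.mem_filter, Finset.mem_sdiff,
        Finset.mem_erase]
      tauto
    have hxU : x ∈ W.erase v \ M := by simp [hxW.1, hxv, hxM]
    have hxU' : x ∈ W.erase v \ (W.filter (H.Adj v)).erase x := by simp [hxW.1, hxv]
    have h3 := eps_rec H hvQ
    have h4 := eps_rec H hxU
    have h5 := eps_rec H hxU'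
    have e4 : (W.erase v \ M).erase x = W.erase v \ insert x M := by
      ext y
      simp only [Finset.mem_insert, Finset.mem_sdiff, Finset.mem_erase]
      tauto
    have e5 : (W.erase v \ (W.filter (H.Adj v)).erase x).erase x
        = W.erase v \ W.filter (H.Adj v) := by
      ext y
      simp only [Finset.mem_filter, Finset.mem_erase, Finset.mem_sdiff]
      by_cases hy : y = x
      · subst hy; tauto
      · tauto
    rw [hQv, hQa] at h3
    rw [e4] at h4
    rw [e5, c.eps_sdiff_nbr hv, c.eps_sdiff_nbr_erase hv hxW.1 hxW.2] at h5
    rcases c.sign with rfl | rfl <;> omega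

open Classical in
/-- Inclusion–exclusion for independent sets containing both of two nonadjacent vertices. -/
lemma second_diff {U : Finset V} {x y : V} (hx : x ∈ U) (hy : y ∈ U) (hxy : x ≠ y)
    (h : ¬ H.Adj x y) : eps H (away H (away H U x) y) =
      eps H ((U.erase x).erase y) - eps H (U.erase y) - eps H (U.erase x) + eps H U := by
  have hyA : y ∈ away H U x := by simp [away, hy, hxy.symm, h]
  have h1 := eps_rec H hx
  have h2 := eps_rec H (Finset.mem_erase.2 ⟨hxy, hx⟩)
  have h3 := eps_rec H hyA
  have h4 : (away H U x).erase y = away H (U.erase y) x := by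
    ext z
    simp only [away, Finset.mem_filter, Finset.mem_erase]
    tauto
  rw [Finset.erase_right_comm] at h2
  rw [h4] at h3
  omega

open Classical in
/-- With three neighbours, two of them `x` and `y`, the graph obtained by deleting the closed
neighbourhoods of `x` and `y` in `W - v`, but keeping `v`, would have count `2 s`. If `x` and `y` are
adjacent, the recurrence is already violated in `W - v - (N(v) \ {x, y})`. -/
lemma card_nbr_le (c : Crit H W s) {v : V} (hv : v ∈ W) :
    (W.filter (H.Adj v)).card ≤ 2 := by
  by_contra! hcard
  set N := W.filter (H.Adj v) with hN
  obtain ⟨x, y, hx, hy, hxy⟩ := Finset.one_lt_card_iff.1 (show 1 < N.card by omega)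
  have hxW := Finset.mem_filter.1 hx
  have hyW := Finset.mem_filter.1 hy
  have hxv : x ≠ v := hxW.2.ne'
  have hyv : y ≠ v := hyW.2.ne'
  have hpair : ({x, y} : Finset V) ⊂ N := by
    refine Finset.ssubset_iff_subset_ne.2 ⟨?_, ?_⟩
    · intro z hz
      rcases Finset.mem_insert.1 hz with rfl | hz
      · exact hx
      · rwa [Finset.mem_singleton.1 hz]
    · intro h
      rw [← h, Finset.card_pair hxy] at hcard
      omega
  have hco : N \ {x, y} ⊂ N :=
    Finset.sdiff_ssubset hpair.1 ⟨x, by simp⟩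
  have hcone : (N \ {x, y}).Nonempty := Finset.sdiff_nonempty.2 hpair.2
  have g1 := c.eps_sdiff_eq_zero hv _ hpair ⟨x, by simp⟩
  have g2 := c.eps_sdiff_eq_zero hv _ hco hcone
  have gx := c.eps_erase_erase hv hxW.1 hxW.2
  have gy := c.eps_erase_erase hv hyW.1 hyW.2
  have gNx := c.eps_sdiff_nbr_erase hv hxW.1 hxW.2
  have gNy := c.eps_sdiff_nbr_erase hv hyW.1 hyW.2
  have gN := c.eps_sdiff_nbr hv
  rw [← hN] at gNx gNy gN
  set U := W.erase v \ (N \ {x, y}) with hU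
  have hxU : x ∈ U := by simp [hU, hxW.1, hxv]
  have hyU : y ∈ U := by simp [hU, hyW.1, hyv]
  have eUx : U.erase x = W.erase v \ N.erase y := by
    ext z
    simp only [hU, Finset.mem_erase, Finset.mem_sdiff, Finset.mem_insert, Finset.mem_singleton]
    by_cases hz : z = x
    · subst hz; tauto
    · tauto
  have eUy : U.erase y = W.erase v \ N.erase x := by
    ext z
    simp only [hU, Finset.mem_erase, Finset.mem_sdiff, Finset.mem_insert, Finset.mem_singleton]
    by_cases hz : z = y
    · subst hz; tauto
    · tauto
  have eUxy : (U.erase x).erase y = W.erase v \ N := by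
    rw [eUx]
    ext z
    simp only [Finset.mem_erase, Finset.mem_sdiff]
    by_cases hz : z = y
    · subst hz; tauto
    · tauto
  by_cases hadj : H.Adj x y
  · have h1 := eps_rec H hxU
    have h2 := eps_rec H (Finset.mem_erase.2 ⟨hxy, hxU⟩)
    have h3 : away H (U.erase y) x = away H U x := by
      ext z
      simp only [away, Finset.mem_filter, Finset.mem_erase]
      constructor
      · tauto
      · rintro ⟨a, b, d⟩
        refine ⟨⟨?_, a⟩, b, d⟩
        rintro rfl
        exact d hadj
    rw [Finset.erase_right_comm, eUxy, h3, eUy] at h2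
    rw [eUx] at h1
    rcases c.sign with rfl | rfl <;> omega
  · have hxK : x ∈ W.erase v := Finset.mem_erase.2 ⟨hxv, hxW.1⟩
    have hyK : y ∈ W.erase v := Finset.mem_erase.2 ⟨hyv, hyW.1⟩
    have h1 := second_diff hxK hyK hxy hadj
    have h2 := second_diff hxU hyU hxy hadj
    have e1 : ((W.erase v).erase x).erase y = W.erase v \ {x, y} := by
      ext z
      simp only [Finset.mem_erase, Finset.mem_sdiff, Finset.mem_insert, Finset.mem_singleton]
      tauto
    rw [e1, g1, gx, gy, c.eps_erase hv] at h1
    rw [eUxy, eUx, eUy, gN, gNx, gNy, g2] at h2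
    set Q := insert v (away H (away H (W.erase v) x) y) with hQ
    have hvQ : v ∈ Q := Finset.mem_insert_self _ _
    have hQW : Q ⊂ W := by
      refine (Finset.ssubset_iff_of_subset ?_).2 ⟨x, hxW.1, ?_⟩
      · intro z hz
        simp only [hQ, away, Finset.mem_insert, Finset.mem_filter, Finset.mem_erase] at hz
        rcases hz with rfl | hz
        · exact hv
        · tauto
      · simp [hQ, away, hxv]
    have h3 := abs_le.1 (c.ssub hQW)
    have hQv : Q.erase v = away H (away H (W.erase v) x) y :=
      Finset.erase_insert (by simp [away])
    have hQa : away H Q v = away H (away H U x) y := by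
      ext z
      simp only [hQ, hU, hN, away, Finset.mem_insert, Finset.mem_filter, Finset.mem_sdiff,
        Finset.mem_erase, Finset.mem_singleton]
      tauto
    rw [eps_rec H hvQ, hQv, hQa] at h3
    rcases c.sign with rfl | rfl <;> omega

open Classical in
lemma card_nbr (c : Crit H W s) {v : V} (hv : v ∈ W) :
    (W.filter (H.Adj v)).card = 2 := by
  have h := c.card_nbr_le hv
  have h1 := c.eps_sdiff_nbr hv
  interval_cases hc : (W.filter (H.Adj v)).card
  · rw [Finset.card_eq_zero.1 hc, Finset.sdiff_empty, c.eps_erase hv] at h1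
    rcases c.sign with rfl | rfl <;> omega
  · obtain ⟨x, hx⟩ := Finset.card_eq_one.1 hc
    have hxW : x ∈ W.filter (H.Adj v) := by simp [hx]
    rw [Finset.mem_filter] at hxW
    have h2 := c.eps_erase_erase hv hxW.1 hxW.2
    rw [hx, ← Finset.erase_eq, h2] at h1
    rcases c.sign with rfl | rfl <;> omega
  · rfl

end Crit

/-! ### The cycle -/

open Classical in
/-- A longest path inside `W`; it cannot be extended beyond its endpoint `w`. -/
lemma exists_longest_path {V : Type*} [Fintype V] (H : SimpleGraph V) {W : Finset V} {a b : V}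
    (ha : a ∈ W) (hb : b ∈ W) (hab : H.Adj a b) :
    ∃ (u w : V) (p : H.Walk u w), p.IsPath ∧ (∀ x ∈ p.support, x ∈ W) ∧ 1 ≤ p.length ∧
      ∀ y ∈ W, H.Adj w y → y ∈ p.support := by
  let P : ℕ → Prop := fun n => ∃ (u w : V) (p : H.Walk u w),
    p.IsPath ∧ (∀ x ∈ p.support, x ∈ W) ∧ p.length = n
  have hP1 : P 1 := ⟨a, b, hab.toWalk, by simp [hab.ne], by simp [ha, hb], by simp⟩
  have hbound : ∀ n, P n → n ≤ Fintype.card V := by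
    rintro n ⟨u, w, p, hp, -, rfl⟩
    exact hp.length_lt.le
  obtain ⟨u, w, p, hp, hpW, hlen⟩ := Nat.findGreatest_spec (hbound 1 hP1) hP1
  refine ⟨u, w, p, hp, hpW, hlen ▸ Nat.le_findGreatest (hbound 1 hP1) hP1, fun y hy hwy => ?_⟩
  by_contra hyp
  have hP : P (p.length + 1) := by
    refine ⟨u, y, p.concat hwy, hp.concat hyp hwy, ?_, by simp⟩
    intro x hx
    rw [SimpleGraph.Walk.support_concat] at hx
    rcases (by simpa using hx : x ∈ p.support ∨ x = y) with h | rfl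
    · exact hpW x h
    · exact hy
  have := Nat.le_findGreatest (hbound _ hP) hP
  omega

namespace Crit

variable {V : Type*} {H : SimpleGraph V} {W : Finset V} {s : ℤ}

open Classical in
/-- Two distinct neighbours of `v` in `W` are its only ones, by 2-regularity. -/
lemma nbr_eq (c : Crit H W s) {v x y : V} (hv : v ∈ W) (hx : x ∈ W) (hy : y ∈ W)
    (hvx : H.Adj v x) (hvy : H.Adj v y) (hxy : x ≠ y) {z : V} (hz : z ∈ W) (hvz : H.Adj v z) :
    z = x ∨ z = y := by
  have h1 : ({x, y} : Finset V) ⊆ W.filter (H.Adj v) := by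
    intro t ht
    simp only [Finset.mem_insert, Finset.mem_singleton] at ht
    rcases ht with rfl | rfl <;> simp [*]
  have h2 := Finset.eq_of_subset_of_card_le h1 (by rw [c.card_nbr hv, Finset.card_pair hxy])
  have h3 : z ∈ ({x, y} : Finset V) := by rw [h2]; simp [hz, hvz]
  simpa using h3

/-- The recurrence `A i = A (i + 1) - A (i + 2)` gives `A (i + 3) = -A i`, so starting from
`A 0 = s`, `A 1 = 0` the zeros are exactly the indices `≡ 1` modulo 3. -/
lemma recurrence_zero {s : ℤ} (hs : s ≠ 0) {m : ℕ} {A : ℕ → ℤ} (h0 : A 0 = s) (h1 : A 1 = 0)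
    (hrec : ∀ i, i + 2 ≤ m → A i = A (i + 1) - A (i + 2)) (i : ℕ) (hi : i + 1 ≤ m) :
    (i % 3 = 0 ∧ A i ≠ 0 ∧ A (i + 1) = 0) ∨ (i % 3 = 1 ∧ A i = 0 ∧ A (i + 1) ≠ 0) ∨
      (i % 3 = 2 ∧ A i ≠ 0 ∧ A (i + 1) = A i) := by
  induction i with
  | zero => left; simp [h0, h1, hs]
  | succ i ih =>
    have := ih (by omega)
    have := hrec i (by omega)
    rw [show i + 1 + 1 = i + 2 from rfl]
    omega

open Classical in
/-- A longest path in a critical graph closes up to a cycle, by 2-regularity. Deleting the first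
`i + 1` path vertices leaves a count `A i`; in what remains the next vertex has degree one, except
that the last one is isolated, which forces `A` to vanish there and pins the length modulo 3. -/
lemma exists_cycle [Fintype V] (c : Crit H W s) :
    ∃ (v : V) (w : H.Walk v v), w.IsCycle ∧ 3 ∣ w.length := by
  have hs : s ≠ 0 := by rcases c.sign with rfl | rfl <;> simp
  obtain ⟨a, ha⟩ : W.Nonempty := by
    by_contra hW
    have h := c.two_le
    rw [Finset.not_nonempty_iff_eq_empty.1 hW] at h
    have : eps H ∅ = 1 := by simp [eps]
    rw [this] at h
    rcases c.sign with rfl | rfl <;> omega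
  obtain ⟨b, hb⟩ : (W.filter (H.Adj a)).Nonempty := by
    rw [← Finset.card_pos, c.card_nbr ha]; norm_num
  rw [Finset.mem_filter] at hb
  obtain ⟨u, w, p, hp, hpW, hlen, hmax⟩ := exists_longest_path H ha hb.1 hb.2
  have hW : ∀ i, p.getVert i ∈ W := fun i => hpW _ (p.getVert_mem_support i)
  have hinj : ∀ i j, i ≤ p.length → j ≤ p.length → p.getVert i = p.getVert j → i = j :=
    fun i j hi hj h => hp.getVert_injOn hi hj h
  have hadj : ∀ i, i < p.length → H.Adj (p.getVert i) (p.getVert (i + 1)) :=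
    fun i hi => p.adj_getVert_succ hi
  have hnbr : ∀ i, i + 2 ≤ p.length → ∀ z ∈ W, H.Adj (p.getVert (i + 1)) z →
      z = p.getVert i ∨ z = p.getVert (i + 2) := by
    intro i hi z hz hadjz
    refine c.nbr_eq (hW (i + 1)) (hW i) (hW (i + 2)) (hadj i (by omega)).symm
      (hadj (i + 1) (by omega)) (fun h => ?_) hz hadjz
    have := hinj _ _ (by omega) (by omega) h
    omega
  obtain ⟨m, hm⟩ : ∃ m, p.length = m + 1 := ⟨p.length - 1, by omega⟩
  have hw : p.getVert (m + 1) = w := by rw [← hm]; simp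
  have hu : p.getVert 0 = u := by simp
  have hwW : w ∈ W := hw ▸ hW (m + 1)
  -- `w` has a neighbour besides its predecessor; inner vertices of the path have no room for it
  obtain ⟨y, hy, hym⟩ : ∃ y ∈ W.filter (H.Adj w), y ≠ p.getVert m := by
    apply Finset.exists_mem_ne
    rw [c.card_nbr hwW]; norm_num
  rw [Finset.mem_filter] at hy
  have hyu : y = u := by
    obtain ⟨j, hj, hjl⟩ := SimpleGraph.Walk.mem_support_iff_exists_getVert.1 (hmax y hy.1 hy.2)
    rcases j with _ | j
    · rw [← hj]; simp
    · exfalso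
      have hjm : j + 1 ≠ m := by rintro rfl; exact hym hj.symm
      have hjm' : j + 1 ≠ m + 1 := by
        intro h
        rw [h, hw] at hj
        exact hy.2.ne hj
      have h1 := hnbr j (by omega) w hwW (by rw [hj]; exact hy.2.symm)
      rcases h1 with h1 | h1 <;>
        have := hinj _ _ (by omega) (by omega) (hw.trans h1) <;> omega
  subst hyu
  -- the count after deletion of the first `i + 1` path vertices
  let A : ℕ → ℤ := fun i => eps H (W \ (Finset.range (i + 1)).image p.getVert)
  have hmem : ∀ i, i < p.length → p.getVert (i + 1) ∈
      W \ (Finset.range (i + 1)).image p.getVert := by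
    intro i hi
    simp only [Finset.mem_sdiff, hW, true_and, Finset.mem_image, Finset.mem_range, not_exists,
      not_and]
    intro k hk h
    have := hinj _ _ (by omega) (by omega) h
    omega
  have hsucc : ∀ i, W \ (Finset.range (i + 1 + 1)).image p.getVert =
      (W \ (Finset.range (i + 1)).image p.getVert).erase (p.getVert (i + 1)) := by
    intro i
    rw [Finset.range_add_one, Finset.image_insert]
    ext z
    simp only [Finset.mem_sdiff, Finset.mem_insert, Finset.mem_erase]
    tauto
  have hA0 : A 0 = s := by
    have : W \ (Finset.range (0 + 1)).image p.getVert = W.erase y := by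
      simp [Finset.erase_eq]
    simp only [A, this]
    exact c.eps_erase hy.1
  have hA1 : A 1 = 0 := by
    have h1 : W \ (Finset.range (1 + 1)).image p.getVert = (W.erase y).erase (p.getVert 1) := by
      rw [hsucc 0]
      simp [Finset.erase_eq]
    simp only [A, h1]
    have := hadj 0 (by omega)
    rw [hu] at this
    exact c.eps_erase_erase hy.1 (hW 1) this
  have hrec : ∀ i, i + 2 ≤ m + 1 → A i = A (i + 1) - A (i + 2) := by
    intro i hi
    simp only [A]
    rw [eps_rec H (hmem i (by omega)), hsucc (i + 1), hsucc i]
    congr 2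
    ext z
    simp only [away, Finset.mem_filter, Finset.mem_erase, Finset.mem_sdiff]
    constructor
    · rintro ⟨⟨h1, h2⟩, h3, h4⟩
      refine ⟨?_, h3, h1, h2⟩
      rintro rfl
      exact h4 (hadj (i + 1) (by omega))
    · rintro ⟨h1, h2, h3, h4⟩
      refine ⟨⟨h3, h4⟩, h2, fun h => ?_⟩
      rcases hnbr i (by omega) z h3 h with h5 | h5
      · exact h4 (Finset.mem_image.2 ⟨i, by simp, h5.symm⟩)
      · exact h1 h5
  -- `w` is isolated once the rest of the path is gone
  have hAm : A m = 0 := by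
    simp only [A]
    rw [eps_rec H (hmem m (by omega)), sub_eq_zero]
    congr 1
    ext z
    simp only [away, Finset.mem_filter, Finset.mem_erase, Finset.mem_sdiff]
    constructor
    · rintro ⟨h1, h2, h3⟩
      refine ⟨⟨h2, h3⟩, h1, fun h => h3 ?_⟩
      rw [hw] at h
      have hwm := (hadj m (by omega)).symm
      rw [hw] at hwm
      rcases c.nbr_eq hwW (hW m) hy.1 hwm hy.2 hym.symm h2 h
        with rfl | rfl
      · exact Finset.mem_image.2 ⟨m, by simp, rfl⟩
      · exact Finset.mem_image.2 ⟨0, by simp, by simp⟩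
    · rintro ⟨⟨h1, h2⟩, h3, -⟩
      exact ⟨h3, h1, h2⟩
  have hmod := recurrence_zero hs hA0 hA1 hrec m le_rfl
  have hmod' : m % 3 = 1 := by omega
  refine ⟨w, SimpleGraph.Walk.cons hy.2 p, ?_, ?_⟩
  · rw [SimpleGraph.Walk.cons_isCycle_iff]
    refine ⟨hp, fun h => ?_⟩
    rw [Sym2.eq_swap] at h
    have := hp.length_eq_one_of_mem_edges h
    omega
  · rw [SimpleGraph.Walk.length_cons]
    omega

end Crit

/-- If G has no cycle of length divisible by 3 (as a subgraph), then |ε(G)| ≤ 1. -/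
theorem stmt_12 {V : Type*} [Fintype V] (G : SimpleGraph V)
    (h : ∀ (v : V) (w : G.Walk v v), w.IsCycle → ¬ (3 ∣ w.length)) :
    |signedIndepCount G| ≤ 1 := by
  classical
  rw [signed_eq_eps]
  by_contra hcon
  obtain ⟨⟨H, W⟩, hle, hmin⟩ := exists_minimal_le_of_wellFoundedLT
    (fun q : SimpleGraph V × Finset V => ¬ |eps q.1 q.2| ≤ 1) (G, Finset.univ) hcon
  have hlt : ∀ H' W', (H', W') < (H, W) → |eps H' W'| ≤ 1 := by
    intro H' W' hlt
    by_contra hbad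
    exact hmin.not_prop_of_lt hlt hbad
  have hbig : 1 < |eps H W| := not_le.1 hmin.prop
  obtain ⟨s, c⟩ : ∃ s, Crit H W s := by
    rcases lt_abs.1 hbig with h1 | h1
    · exact ⟨1, Or.inl rfl, by omega, hlt⟩
    · exact ⟨-1, Or.inr rfl, by omega, hlt⟩
  obtain ⟨v, w, hw, hdvd⟩ := c.exists_cycle
  exact h v (w.mapLe hle.1) (hw.mapLe hle.1) (by simpa using hdvd)
end
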